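/- Let ℓ be a prime, r ≥ 1, and let F be a finite field with ℓ^r elements, with ℓ^r ≠ 2. For every n ≥ 1, the stabilization map GL_n(F) → GL_{n+1}(F), A ↦ diag(A,1), induces an isomorphism H_d(GL_n(F); F_ℓ) → H_d(GL_{n+1}(F); F_ℓ) for all d ≤ n + r(ℓ−1) − 3, and a surjection for d = n + r(ℓ−1) − 2, where F_ℓ is the ℓ-element field with trivial action. -/

import Mathlib

/-! # Group homology via the inhomogeneous bar complex (trivial coefficients) -/

namespace GroupHomologyBar

variable (G : Type) [Group G] (A : Type) [AddCommGroup A]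

/-- Inhomogeneous `n`-chains of `G` with coefficients in `A`. -/
abbrev chains (n : ℕ) : Type := (Fin n → G) →₀ A

/-- The differential of the inhomogeneous bar complex with trivial `G`-action on the
coefficients, sending `[g₁|…|g_{n+1}] ⊗ a` to
`[g₂|…|g_{n+1}] ⊗ a + ∑ⱼ (-1)^{j+1} [g₁|…|gⱼg_{j+1}|…|g_{n+1}] ⊗ a`
(the last summand of the sum being `(-1)^{n+1} [g₁|…|g_n] ⊗ a`). -/
noncomputable def d (n : ℕ) : chains G A (n + 1) →ₗ[ℤ] chains G A n :=
  Finsupp.lsum ℤ fun g =>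
    (Finsupp.lsingle (Fin.tail g) : A →ₗ[ℤ] chains G A n)
      + ∑ j : Fin (n + 1),
          ((-1 : ℤ) ^ ((j : ℕ) + 1)) • Finsupp.lsingle (Fin.contractNth j (· * ·) g)

/-- The `n`-cycles. -/
noncomputable def cycles : (n : ℕ) → Submodule ℤ (chains G A n)
  | 0 => ⊤
  | (n + 1) => LinearMap.ker (d G A n)

/-- The `n`-boundaries, viewed as a submodule of the `n`-cycles. -/
noncomputable def boundaries (n : ℕ) : Submodule ℤ (cycles G A n) :=
  Submodule.comap (cycles G A n).subtype (LinearMap.range (d G A n))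

/-- The group homology `H_n(G; A)` of `G` with trivial coefficients in `A`. -/
abbrev Homology (n : ℕ) : Type := cycles G A n ⧸ boundaries G A n

variable {G}
variable {G' : Type} [Group G']

/-- The map on chains induced by a group homomorphism. -/
noncomputable def chainsMap (φ : G →* G') (n : ℕ) : chains G A n →ₗ[ℤ] chains G' A n :=
  Finsupp.lmapDomain A ℤ fun v => φ ∘ v

lemma chainsMap_single (φ : G →* G') {n : ℕ} (v : Fin n → G) (a : A) :
    chainsMap A φ n (Finsupp.single v a) = Finsupp.single (φ ∘ v) a := by
  simp [chainsMap, Finsupp.mapDomain_single]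

lemma d_single {n : ℕ} (g : Fin (n + 1) → G) (a : A) :
    d G A n (Finsupp.single g a)
      = Finsupp.single (Fin.tail g) a
        + ∑ j : Fin (n + 1),
            ((-1 : ℤ) ^ ((j : ℕ) + 1)) • Finsupp.single (Fin.contractNth j (· * ·) g) a := by
  simp [d, Finsupp.lsum_single]

lemma d_chainsMap (φ : G →* G') (n : ℕ) :
    (d G' A n).comp (chainsMap A φ (n + 1)) = (chainsMap A φ n).comp (d G A n) := by
  apply Finsupp.lhom_ext
  intro g a
  have hc : ∀ j : Fin (n + 1),
      φ ∘ Fin.contractNth j (· * ·) g = Fin.contractNth j (· * ·) (φ ∘ g) := by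
    intro j
    funext k
    simp only [Function.comp_apply, Fin.contractNth]
    split_ifs <;> simp
  simp only [LinearMap.comp_apply, chainsMap_single, d_single, map_add, map_sum, map_smul,
    chainsMap_single, Fin.comp_tail, hc]

lemma chainsMap_mem_cycles (φ : G →* G') (n : ℕ) :
    ∀ x ∈ cycles G A n, chainsMap A φ n x ∈ cycles G' A n := by
  intro x hx
  cases n with
  | zero => trivial
  | succ n =>
    simp only [cycles, LinearMap.mem_ker] at hx ⊢
    have := congrArg (fun L : chains G A (n + 1) →ₗ[ℤ] chains G' A n => L x) (d_chainsMap A φ n)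
    simp only [LinearMap.comp_apply] at this
    rw [this, hx, map_zero]

/-- The map on cycles induced by a group homomorphism. -/
noncomputable def cyclesMap (φ : G →* G') (n : ℕ) : cycles G A n →ₗ[ℤ] cycles G' A n :=
  (chainsMap A φ n).restrict (chainsMap_mem_cycles A φ n)

/-- The map `H_n(G; A) → H_n(G'; A)` on group homology induced by a group
homomorphism `φ : G →* G'`. -/
noncomputable def inducedMap (φ : G →* G') (n : ℕ) :
    Homology G A n →ₗ[ℤ] Homology G' A n :=
  Submodule.mapQ _ _ (cyclesMap A φ n) (by
    rintro ⟨x, hx⟩ hmem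
    simp only [boundaries, Submodule.mem_comap, Submodule.subtype_apply,
      LinearMap.mem_range] at hmem ⊢
    obtain ⟨y, hy⟩ := hmem
    refine ⟨chainsMap A φ (n + 1) y, ?_⟩
    have := congrArg (fun L : chains G A (n + 1) →ₗ[ℤ] chains G' A n => L y) (d_chainsMap A φ n)
    simp only [LinearMap.comp_apply] at this
    rw [this, hy]
    rfl)

end GroupHomologyBar

/-- The block-sum monoid homomorphism `A ↦ diag(A, 1)` on square matrices. -/
noncomputable def diagBlockHom (F : Type) [Field F] (n : ℕ) :
    Matrix (Fin n) (Fin n) F →* Matrix (Fin (n + 1)) (Fin (n + 1)) F :=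
  ((Matrix.reindexAlgEquiv F F (finSumFinEquiv : Fin n ⊕ Fin 1 ≃ Fin (n + 1))).toRingEquiv.toMonoidHom).comp
    { toFun := fun A => Matrix.fromBlocks A 0 0 (1 : Matrix (Fin 1) (Fin 1) F)
      map_one' := Matrix.fromBlocks_one
      map_mul' := fun A B => by
        rw [Matrix.fromBlocks_multiply]
        simp }

/-- The stabilization homomorphism `GL_n(F) → GL_{n+1}(F)`, `A ↦ diag(A, 1)`. -/
noncomputable def glStab (F : Type) [Field F] (n : ℕ) :
    GL (Fin n) F →* GL (Fin (n + 1)) F :=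
  Units.map (diagBlockHom F n)

namespace Coh

/-- homogeneous differential -/
def dd {E A : Type} [AddCommGroup A] : (n : ℕ) → ((Fin n → E) → A) → (Fin (n+1) → E) → A
  | 0, f, x => f (Fin.tail x)
  | n+1, f, x => f (Fin.tail x) - dd n (fun y => f (Fin.cons (x 0) y)) (Fin.tail x)

section basic
variable {E E' A B : Type} [AddCommGroup A] [AddCommGroup B]

lemma tail_comp {n : ℕ} (γ : E → E') (x : Fin (n+1) → E) :
    Fin.tail (fun i => γ (x i)) = fun i => γ (Fin.tail x i) := rfl

lemma cons_map {n : ℕ} (γ : E → E') (a : E) (y : Fin n → E) :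
    (fun i => γ ((Fin.cons a y : Fin (n+1) → E) i)) = Fin.cons (γ a) (fun i => γ (y i)) := by
  funext i
  refine Fin.cases ?_ (fun j => ?_) i <;> simp

lemma dd_map (L : A →+ B) : ∀ (n : ℕ) (f : (Fin n → E) → A) (x),
    L (dd n f x) = dd n (fun y => L (f y)) x
  | 0, f, x => rfl
  | n+1, f, x => by simp only [dd, map_sub, dd_map L n]

lemma dd_comp (γ : E → E') : ∀ (n : ℕ) (f : (Fin n → E') → A) (x : Fin (n+1) → E),
    dd n f (fun i => γ (x i)) = dd n (fun y => f (fun i => γ (y i))) x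
  | 0, f, x => rfl
  | n+1, f, x => by
    simp only [dd, tail_comp, dd_comp γ n, cons_map]

lemma dd_add : ∀ (n : ℕ) (f g : (Fin n → E) → A), dd n (f + g) = dd n f + dd n g
  | 0, f, g => rfl
  | n+1, f, g => by
    funext x
    have := congrFun (dd_add n (fun y => f (Fin.cons (x 0) y)) (fun y => g (Fin.cons (x 0) y)))
      (Fin.tail x)
    simp only [dd, Pi.add_apply] at this ⊢
    have e : (fun y => f (Fin.cons (x 0) y) + g (Fin.cons (x 0) y)) =
      (fun y => f (Fin.cons (x 0) y)) + (fun y => g (Fin.cons (x 0) y)) := rfl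
    rw [e, this]; abel

/-- additive version -/
def ddH (n : ℕ) : ((Fin n → E) → A) →+ ((Fin (n+1) → E) → A) :=
  AddMonoidHom.mk' (dd n) (dd_add n)

lemma dd_zero (n : ℕ) : dd n (0 : (Fin n → E) → A) = 0 := map_zero (ddH n)
lemma dd_sub (n : ℕ) (f g : (Fin n → E) → A) : dd n (f - g) = dd n f - dd n g :=
  map_sub (ddH n) f g
lemma dd_neg (n : ℕ) (f : (Fin n → E) → A) : dd n (-f) = - dd n f := map_neg (ddH n) f

lemma dd_dd : ∀ (n : ℕ) (f : (Fin n → E) → A), dd (n+1) (dd n f) = 0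
  | 0, f => by
    funext x
    simp only [dd, Pi.zero_apply]
    have : ∀ u v : Fin 0 → E, f u = f v := fun u v => congrArg f (Subsingleton.elim _ _)
    rw [sub_eq_zero]; exact this _ _
  | n+1, f => by
    funext x
    have h1 : (fun y => dd (n+1) f (Fin.cons (x 0) y)) =
        f - dd n (fun y => f (Fin.cons (x 0) y)) := by
      funext y; simp [dd]
    rw [dd, h1, dd_sub, dd_dd n]
    simp

/-- the prism operator -/
def prism (α β : E → E') : (n : ℕ) → ((Fin (n+1) → E') → A) → (Fin n → E) → A
  | 0, _, _ => 0
  | n+1, f, x => f (Fin.cons (α (x 0)) (Fin.cons (β (x 0)) (fun i => β (Fin.tail x i)))) -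
      prism α β n (fun y => f (Fin.cons (α (x 0)) y)) (Fin.tail x)

lemma prism_add (α β : E → E') : ∀ (n : ℕ) (f g : (Fin (n+1) → E') → A),
    prism α β n (f + g) = prism α β n f + prism α β n g
  | 0, f, g => by funext x; simp [prism]
  | n+1, f, g => by
    funext x
    have := congrFun (prism_add α β n (fun y => f (Fin.cons (α (x 0)) y))
      (fun y => g (Fin.cons (α (x 0)) y))) (Fin.tail x)
    simp only [prism, Pi.add_apply] at this ⊢
    have e : (fun y => f (Fin.cons (α (x 0)) y) + g (Fin.cons (α (x 0)) y)) =
      (fun y => f (Fin.cons (α (x 0)) y)) + (fun y => g (Fin.cons (α (x 0)) y)) := rfl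
    rw [e, this]; abel

lemma prism_sub (α β : E → E') (n : ℕ) (f g : (Fin (n+1) → E') → A) :
    prism α β n (f - g) = prism α β n f - prism α β n g :=
  map_sub (AddMonoidHom.mk' (prism α β n) (prism_add α β n)) f g

lemma prism_zero (α β : E → E') (n : ℕ) :
    prism α β n (0 : (Fin (n+1) → E') → A) = 0 :=
  map_zero (AddMonoidHom.mk' (prism α β n) (prism_add α β n))

lemma prism_nat (α β : E → E') (a : E → E) (a' : E' → E') (hα : ∀ x, α (a x) = a' (α x))
    (hβ : ∀ x, β (a x) = a' (β x)) : ∀ (n : ℕ) (f : (Fin (n+1) → E') → A) (x : Fin n → E),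
    prism α β n f (fun i => a (x i)) = prism α β n (fun y => f (fun i => a' (y i))) x
  | 0, f, x => rfl
  | n+1, f, x => by
    simp only [prism, tail_comp, prism_nat α β a a' hα hβ n, cons_map, hα, hβ]

lemma cons_tail {n : ℕ} (x : Fin (n+1) → E) : Fin.cons (x 0) (Fin.tail x) = x :=
  Fin.cons_self_tail x

lemma prism_id (α β : E → E') : ∀ (n : ℕ) (f : (Fin (n+1) → E') → A) (x : Fin (n+1) → E),
    dd n (prism α β n f) x + prism α β (n+1) (dd (n+1) f) x =
      f (fun i => β (x i)) - f (fun i => α (x i))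
  | 0, f, x => by
    have h1 : dd 0 (prism α β 0 f) x = 0 := rfl
    rw [h1]
    simp only [prism, dd, zero_add, sub_zero, Fin.tail_cons, Fin.cons_zero]
    congr 2 <;> (funext i; fin_cases i; rfl)
  | n+1, f, x => by
    have h1 : (fun y => prism α β (n+1) f (Fin.cons (x 0) y)) =
        (fun y => f (Fin.cons (α (x 0)) (Fin.cons (β (x 0)) (fun i => β (y i))))) -
          prism α β n (fun y => f (Fin.cons (α (x 0)) y)) := by
      funext y
      simp [prism]
    have h2 : (fun y => dd (n+1+1) f (Fin.cons (α (x 0)) y)) =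
        f - dd (n+1) (fun y => f (Fin.cons (α (x 0)) y)) := by
      funext y
      simp [dd]
    have ih := prism_id α β n (fun y => f (Fin.cons (α (x 0)) y)) (Fin.tail x)
    have h3 : dd n (fun y => f (Fin.cons (α (x 0)) (Fin.cons (β (x 0)) (fun i => β (y i)))))
        (Fin.tail x) = dd n (fun y => f (Fin.cons (α (x 0)) (Fin.cons (β (x 0)) y)))
          (fun i => β (Fin.tail x i)) :=
      (dd_comp β n (fun y => f (Fin.cons (α (x 0)) (Fin.cons (β (x 0)) y))) (Fin.tail x)).symm
    have h4 : f (fun i => β (x i)) = f (Fin.cons (β (x 0)) (fun i => β (Fin.tail x i))) := by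
      congr 1; rw [← cons_map, cons_tail]
    have h5 : f (fun i => α (x i)) = f (Fin.cons (α (x 0)) (fun i => α (Fin.tail x i))) := by
      congr 1; rw [← cons_map, cons_tail]
    have e1 : dd (n+1) (prism α β (n+1) f) x = prism α β (n+1) f (Fin.tail x) -
       (dd n (fun y => f (Fin.cons (α (x 0)) (Fin.cons (β (x 0)) (fun i => β (y i)))))
        (Fin.tail x) - dd n (prism α β n (fun y => f (Fin.cons (α (x 0)) y))) (Fin.tail x)) := by
      rw [dd, h1, dd_sub]; rfl
    have e2 : prism α β (n+1+1) (dd (n+1+1) f) x =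
        f (Fin.cons (β (x 0)) (fun i => β (Fin.tail x i)))
        - (f (Fin.cons (α (x 0)) (fun i => β (Fin.tail x i))) -
          dd n (fun y => f (Fin.cons (α (x 0)) (Fin.cons (β (x 0)) y)))
          (fun i => β (Fin.tail x i)))
        - (prism α β (n+1) f (Fin.tail x) - prism α β (n+1)
            (dd (n+1) (fun y => f (Fin.cons (α (x 0)) y))) (Fin.tail x)) := by
      rw [prism, h2, prism_sub]
      simp [dd]
    rw [e1, e2, h4, h5, h3]
    rw [eq_sub_iff_add_eq] at ih ⊢
    rw [← ih]; abel

end basic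

lemma dd_smul {E k A : Type} [AddCommGroup A] [CommRing k] [Module k A] (c : k) (n : ℕ)
    (f : (Fin n → E) → A) : dd n (c • f) = c • dd n f := by
  funext x
  have := dd_map (DistribSMul.toAddMonoidHom A c) n f x
  exact this.symm

section H
variable (k : Type) [Field k] (G : Type) [Group G]

/-- invariant cochains -/
def Cc (n : ℕ) : Submodule k ((Fin n → G) → k) where
  carrier := {f | ∀ g x, f (fun i => g * x i) = f x}
  add_mem' := by
    intro a b ha hb g x
    have h1 := ha g x
    have h2 := hb g x
    simp [h1, h2]
  zero_mem' := fun _ _ => rfl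
  smul_mem' := by
    intro c f hf g x
    have := hf g x
    simp [this]

/-- cocycles -/
def Zc (n : ℕ) : Submodule k ((Fin (n+1) → G) → k) where
  carrier := {f | f ∈ Cc k G (n+1) ∧ dd (n+1) f = 0}
  add_mem' := by
    rintro a b ⟨ha, ha'⟩ ⟨hb, hb'⟩
    exact ⟨add_mem ha hb, by rw [dd_add, ha', hb', add_zero]⟩
  zero_mem' := ⟨zero_mem _, dd_zero _⟩
  smul_mem' := by
    rintro c f ⟨hf, hf'⟩
    exact ⟨Submodule.smul_mem _ _ hf, by rw [dd_smul, hf', smul_zero]⟩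

/-- coboundaries -/
def Bc (n : ℕ) : Submodule k (Zc k G n) where
  carrier := {f | ∃ u ∈ Cc k G n, dd n u = f.1}
  add_mem' := by
    rintro a b ⟨u, hu, hu'⟩ ⟨v, hv, hv'⟩
    exact ⟨u + v, add_mem hu hv, by rw [dd_add, hu', hv']; rfl⟩
  zero_mem' := ⟨0, zero_mem _, dd_zero _⟩
  smul_mem' := by
    rintro c f ⟨u, hu, hu'⟩
    exact ⟨c • u, Submodule.smul_mem _ _ hu, by rw [dd_smul, hu']; rfl⟩

/-- cohomology -/
def H (n : ℕ) : Type := Zc k G n ⧸ Bc k G n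

noncomputable instance (n : ℕ) : AddCommGroup (H k G n) :=
  inferInstanceAs (AddCommGroup (Zc k G n ⧸ Bc k G n))
noncomputable instance (n : ℕ) : Module k (H k G n) :=
  inferInstanceAs (Module k (Zc k G n ⧸ Bc k G n))

variable {G}
/-- class map -/
noncomputable def clsL (n : ℕ) : Zc k G n →ₗ[k] H k G n := (Bc k G n).mkQ

/-- class of a cocycle -/
noncomputable def cls {n : ℕ} (f : (Fin (n+1) → G) → k) (hf : f ∈ Zc k G n) : H k G n :=
  clsL k n ⟨f, hf⟩

variable {k}
lemma cls_surj {n : ℕ} (x : H k G n) : ∃ f hf, cls k f hf = x := by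
  obtain ⟨f, hf⟩ := Submodule.mkQ_surjective _ x
  exact ⟨f.1, f.2, hf⟩

lemma cls_eq_zero {n : ℕ} (f : (Fin (n+1) → G) → k) (hf : f ∈ Zc k G n) :
    cls k f hf = 0 ↔ ∃ u ∈ Cc k G n, dd n u = f := by
  unfold cls clsL
  exact (Submodule.Quotient.mk_eq_zero (Bc k G n)).trans Iff.rfl

lemma cls_sub {n : ℕ} (f g : (Fin (n+1) → G) → k) (hf : f ∈ Zc k G n) (hg : g ∈ Zc k G n) :
    cls k (f - g) (sub_mem hf hg) = cls k f hf - cls k g hg :=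
  map_sub (clsL k n) ⟨f, hf⟩ ⟨g, hg⟩

lemma cls_eq {n : ℕ} (f g : (Fin (n+1) → G) → k) (hf : f ∈ Zc k G n) (hg : g ∈ Zc k G n)
    (h : ∃ u ∈ Cc k G n, dd n u = f - g) : cls k f hf = cls k g hg := by
  rw [← sub_eq_zero, ← cls_sub, cls_eq_zero]; exact h

variable {G' G'' : Type} [Group G'] [Group G'']

lemma comp_mem_Cc (φ : G' →* G) {n : ℕ} {f : (Fin n → G) → k} (hf : f ∈ Cc k G n) :
    (fun x => f (fun i => φ (x i))) ∈ Cc k G' n := by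
  intro g x
  simp only [map_mul]
  exact hf _ _

lemma comp_mem_Zc (φ : G' →* G) {n : ℕ} {f : (Fin (n+1) → G) → k} (hf : f ∈ Zc k G n) :
    (fun x => f (fun i => φ (x i))) ∈ Zc k G' n := by
  refine ⟨comp_mem_Cc φ hf.1, ?_⟩
  funext x
  rw [← dd_comp φ, hf.2]; rfl

/-- restriction on cocycles -/
def resZ (φ : G' →* G) (n : ℕ) : Zc k G n →ₗ[k] Zc k G' n where
  toFun f := ⟨_, comp_mem_Zc φ f.2⟩
  map_add' _ _ := rfl
  map_smul' _ _ := rfl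

/-- restriction -/
noncomputable def res (φ : G' →* G) {n : ℕ} : H k G n →ₗ[k] H k G' n :=
  Submodule.mapQ _ _ (resZ φ n) (by
    rintro f ⟨u, hu, hu'⟩
    refine ⟨_, comp_mem_Cc φ hu, ?_⟩
    funext x
    rw [← dd_comp φ, hu']; rfl)

lemma res_cls (φ : G' →* G) {n : ℕ} (f : (Fin (n+1) → G) → k) (hf : f ∈ Zc k G n) :
    res φ (cls k f hf) = cls k _ (comp_mem_Zc φ hf) := rfl

lemma res_id {n : ℕ} (x : H k G n) : res (MonoidHom.id G) x = x := by
  obtain ⟨f, hf, rfl⟩ := cls_surj x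
  rfl

lemma res_res (φ : G' →* G) (ψ : G'' →* G') {n : ℕ} (x : H k G n) :
    res ψ (res φ x) = res (φ.comp ψ) x := by
  obtain ⟨f, hf, rfl⟩ := cls_surj x
  rfl

lemma res_eq_of_comp (φ φ' : G' →* G) (h : ∀ x, φ x = φ' x) {n : ℕ} (x : H k G n) :
    res φ x = res φ' x := by
  rw [MonoidHom.ext h]

lemma res_conj (φ φ' : G' →* G) (g : G) (h : ∀ x, g * φ x = φ' x * g) {n : ℕ} (x : H k G n) :
    res φ x = res φ' x := by
  obtain ⟨f, hf, rfl⟩ := cls_surj x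
  rw [res_cls, res_cls]
  apply cls_eq
  refine ⟨prism (fun y => φ' y) (fun y => φ' y * g) n f, ?_, ?_⟩
  · intro a y
    rw [prism_nat _ _ (fun y => a * y) (fun y => φ' a * y) (by simp) (by simp [mul_assoc])]
    congr 1; funext y; exact hf.1 _ _
  · funext y
    have := prism_id (fun y => φ' y) (fun y => φ' y * g) n f y
    rw [hf.2, prism_zero] at this
    simp only [Pi.zero_apply, add_zero] at this
    rw [this]
    simp only [← h, Pi.sub_apply]
    rw [hf.1]

lemma H_zero (x : H k G 0) : x = 0 := by
  obtain ⟨f, hf, rfl⟩ := cls_surj x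
  rw [cls_eq_zero]
  refine ⟨fun _ => f (fun _ => 1), fun _ _ => rfl, ?_⟩
  funext x
  have h := hf.1 (x 0) (fun _ => 1)
  simp only [dd]
  rw [← h]
  congr 1
  funext i
  fin_cases i
  simp

/-- restriction lemma -/
lemma restr (ι : G' →* G) (hι : Function.Injective ι) {n : ℕ} (f : (Fin (n+1) → G) → k)
    (hf : ∀ g x, f (fun i => ι g * x i) = f x) (hd : dd (n+1) f = 0)
    (u0 : (Fin n → G') → k) (hu0 : u0 ∈ Cc k G' n)
    (h : ∀ x, dd n u0 x = f (fun i => ι (x i))) :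
    ∃ u : (Fin n → G) → k, (∀ g x, u (fun i => ι g * x i) = u x) ∧ dd n u = f := by
  classical
  let s : Setoid G := ⟨fun a b => ∃ m, b = ι m * a, fun a => ⟨1, by simp⟩,
    fun {a b} ⟨m, hm⟩ => ⟨m⁻¹, by simp [hm]⟩,
    fun {a b c} ⟨m, hm⟩ ⟨m', hm'⟩ => ⟨m' * m, by simp [hm', hm, mul_assoc]⟩⟩
  have hrep : ∀ g : G, ∃ m, g = ι m * (Quotient.mk s g).out := by
    intro g
    exact Quotient.mk_out (s := s) g
  choose ρ hρ using hrep
  have hρe : ∀ m g, ρ (ι m * g) = m * ρ g := by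
    intro m g
    have hq : Quotient.mk s (ι m * g) = Quotient.mk s g :=
      (Quotient.sound (s := s) ⟨m, rfl⟩).symm
    have h1 := hρ (ι m * g)
    rw [hq] at h1
    have h2 : ι m * g = ι m * (ι (ρ g) * (Quotient.mk s g).out) := by rw [← hρ g]
    have h4 := h1.symm.trans h2
    rw [← mul_assoc, ← map_mul] at h4
    exact hι (mul_right_cancel h4)
  refine ⟨prism (fun y => ι (ρ y)) (fun y => y) n f + fun y => u0 (fun i => ρ (y i)), ?_, ?_⟩
  · intro g x
    simp only [Pi.add_apply]
    rw [prism_nat _ _ (fun y => ι g * y) (fun y => ι g * y) (by simp [hρe]) (by simp)]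
    simp only [hρe]
    rw [hu0]
    congr 1
    congr 1; funext y; exact hf _ _
  · rw [dd_add]
    funext y
    have := prism_id (fun y => ι (ρ y)) (fun y => y) n f y
    rw [hd, prism_zero] at this
    simp only [Pi.zero_apply, add_zero] at this
    rw [Pi.add_apply, this, ← dd_comp ρ, h]
    simp

lemma transfer [Finite G] (ι : G' →* G) (hι : Function.Injective ι)
    (hidx : (ι.range.index : k) ≠ 0) {n : ℕ} (x : H k G n) (hx : res ι x = 0) : x = 0 := by
  classical
  obtain ⟨f, hf, rfl⟩ := cls_surj x
  rw [res_cls, cls_eq_zero] at hx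
  obtain ⟨u0, hu0, h0⟩ := hx
  obtain ⟨u, hu, hd⟩ := restr ι hι f (fun g x => hf.1 _ _) hf.2 u0 hu0 (fun x => congrFun h0 x)
  rw [cls_eq_zero]
  have : Fintype (G ⧸ ι.range) := Fintype.ofFinite _
  have hu' : ∀ (a b : G), (QuotientGroup.mk a : G ⧸ ι.range) = QuotientGroup.mk b → ∀ x : Fin n → G,
      u (fun i => a⁻¹ * x i) = u (fun i => b⁻¹ * x i) := by
    intro a b hab x
    obtain ⟨m, hm⟩ := QuotientGroup.eq.1 hab
    have := hu m (fun i => b⁻¹ * x i)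
    rw [← this, hm]; simp [mul_assoc]
  let U : (Fin n → G) → k := ∑ q : G ⧸ ι.range, fun x => u (fun i => q.out⁻¹ * x i)
  have hUdd : dd n U = (ι.range.index : k) • f := by
    have : dd n U = ∑ q : G ⧸ ι.range, dd n (fun x => u (fun i => q.out⁻¹ * x i)) :=
      map_sum (ddH n) _ _
    rw [this]
    have h2 : ∀ q : G ⧸ ι.range, dd n (fun x => u (fun i => q.out⁻¹ * x i)) = f := by
      intro q
      funext x
      rw [← dd_comp (fun y => q.out⁻¹ * y), hd, hf.1]
    simp only [h2, Finset.sum_const, Finset.card_univ, Subgroup.index, Nat.card_eq_fintype_card]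
    rw [Nat.cast_smul_eq_nsmul]
  refine ⟨(ι.range.index : k)⁻¹ • U, Submodule.smul_mem _ _ ?_, ?_⟩
  · intro g x
    simp only [U, Finset.sum_apply]
    refine Fintype.sum_equiv (MulAction.toPerm g⁻¹) _ _ ?_
    intro q
    have := hu' (g⁻¹ * q.out) (g⁻¹ • q).out (by
      rw [QuotientGroup.out_eq']
      conv_rhs => rw [← QuotientGroup.out_eq' q]
      rfl) x
    simp only [MulAction.toPerm_apply]
    rw [← this]; simp [mul_assoc]
  · rw [dd_smul, hUdd, smul_smul, inv_mul_cancel₀ hidx, one_smul]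

lemma H_coprime [Finite G] (h : (Nat.card G : k) ≠ 0) {n : ℕ} (x : H k G n) : x = 0 := by
  let ι : Unit →* G := 1
  refine transfer ι (fun _ _ _ => rfl) ?_ x ?_
  · have : ι.range = ⊥ := by
      rw [MonoidHom.range_eq_bot_iff]
    rw [this, Subgroup.index_bot]; exact h
  · obtain ⟨f, hf, rfl⟩ := cls_surj x
    rw [res_cls, cls_eq_zero]
    cases n with
    | zero => exact (cls_eq_zero _ _).1 (H_zero (cls k _ (comp_mem_Zc ι hf)))
    | succ n =>
      have h1 := (comp_mem_Zc ι hf)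
      set F := (fun x : Fin (n+1+1) → Unit => f (fun i => ι (x i))) with hF
      refine ⟨prism (fun y => y) (fun y => y) (n+1) F + fun y => F (Fin.cons () y), fun _ _ => rfl, ?_⟩
      rw [dd_add]
      funext y
      have := prism_id (fun y => y) (fun y => y) (n+1) F y
      rw [h1.2, prism_zero] at this
      simp only [Pi.zero_apply, add_zero, sub_self] at this
      rw [Pi.add_apply, this, zero_add]
      have h2 := congrFun h1.2 (Fin.cons () y)
      rw [dd] at h2
      simp only [Fin.tail_cons, Fin.cons_zero, Pi.zero_apply] at h2
      exact (sub_eq_zero.1 h2).symm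

end H
end Coh

namespace Coh

/-- data of a normal extension with compatible endomorphisms -/
structure LD (G N Q I : Type) [Group G] [Group N] [Group Q] where
  ι : N →* G
  inj : Function.Injective ι
  π : G →* Q
  surj : Function.Surjective π
  ker : ∀ g, π g = 1 → ∃ n, ι n = g
  kerι : ∀ n, π (ι n) = 1
  φG : I → G →* G
  φN : I → N →* N
  comp : ∀ i n, ι (φN i n) = φG i (ι n)
  πφ : ∀ i g, π (φG i g) = π g
  idem : ∀ i n, φN i (φN i n) = φN i n
  comm : ∀ i j n, φN i (φN j n) = φN j (φN i n)
  i0 : I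
  l : List I
  hl : ∀ i, i ∈ l

namespace LD
variable {k : Type} [Field k] {G N Q I : Type} [Group G] [Group N] [Group Q] (D : LD G N Q I)

/-- 1 - φ^* -/
def op {b : ℕ} (φ : G → G) : ((Fin b → G) → k) →+ ((Fin b → G) → k) where
  toFun f := fun y => f y - f (fun i => φ (y i))
  map_zero' := by funext y; simp
  map_add' f g := by funext y; simp; ring

/-- product of the operators -/
def eL {b : ℕ} : List I → (((Fin b → G) → k) →+ ((Fin b → G) → k))
  | [] => AddMonoidHom.id _
  | i :: l => (op (D.φG i)).comp (eL l)

lemma dd_op {b : ℕ} (φ : G → G) (f : (Fin b → G) → k) : dd b (op φ f) = op φ (dd b f) := by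
  have : (op φ f) = f - fun y => f (fun i => φ (y i)) := rfl
  rw [this, dd_sub]
  funext y
  simp only [Pi.sub_apply, op, AddMonoidHom.coe_mk, ZeroHom.coe_mk]
  rw [dd_comp φ]

lemma dd_eL {b : ℕ} (f : (Fin b → G) → k) : ∀ l : List I, dd b (D.eL l f) = D.eL l (dd b f)
  | [] => rfl
  | i :: l => by
    simp only [eL, AddMonoidHom.comp_apply, dd_op, dd_eL f l]

/-- invariance of double functions -/
def Inv {a b : ℕ} (w : (Fin a → Q) → (Fin b → G) → k) : Prop :=
  ∀ g x y, w (fun i => D.π g * x i) (fun i => g * y i) = w x y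

variable {D}

lemma Inv.eL {a b : ℕ} {w : (Fin a → Q) → (Fin b → G) → k} (hw : D.Inv w) :
    ∀ l, D.Inv (fun x => D.eL l (w x))
  | [] => hw
  | i :: l => by
    intro g x y
    have h := Inv.eL hw l
    have h1 := h g x y
    have h2 := h (D.φG i g) x (fun j => D.φG i (y j))
    rw [D.πφ] at h2
    simp only [LD.eL, op, AddMonoidHom.comp_apply, AddMonoidHom.coe_mk, ZeroHom.coe_mk, map_mul]
    simp only at h1 h2
    rw [h1, h2]

lemma Inv.dV {a b : ℕ} {w : (Fin a → Q) → (Fin b → G) → k} (hw : D.Inv w) :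
    D.Inv (fun x => dd b (w x)) := by
  intro g x y
  have := dd_comp (fun z => g * z) b (w (fun i => D.π g * x i)) y
  simp only [this]
  congr 1
  funext y
  exact hw g x y

lemma Inv.del {a b : ℕ} {w : (Fin a → Q) → (Fin b → G) → k} (hw : D.Inv w) :
    D.Inv (dd a w) := by
  intro g x y
  have h1 := dd_comp (fun z => D.π g * z) a w x
  simp only [h1]
  have h2 := fun y' => dd_map (Pi.evalAddMonoidHom (fun _ : Fin b → G => k) y') a (E := Q)
  simp only [Pi.evalAddMonoidHom_apply] at h2
  rw [h2, h2]
  congr 1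
  funext x
  exact hw g x y

lemma Inv.sub {a b : ℕ} {w w' : (Fin a → Q) → (Fin b → G) → k} (hw : D.Inv w) (hw' : D.Inv w') :
    D.Inv (w - w') := by
  intro g x y
  simp only [Pi.sub_apply, hw g x y, hw' g x y]

lemma del_dV {a b : ℕ} (w : (Fin a → Q) → (Fin b → G) → k) :
    dd a (fun x => dd b (w x)) = fun x => dd b (dd a w x) := by
  funext x
  exact (dd_map (ddH b) a w x).symm

lemma del_eL {a b : ℕ} (w : (Fin a → Q) → (Fin b → G) → k) (l : List I) :
    dd a (fun x => D.eL l (w x)) = fun x => D.eL l (dd a w x) := by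
  funext x
  exact (dd_map (D.eL l) a w x).symm

/-- row exactness -/
lemma row {a b : ℕ} {w : (Fin (a+1) → Q) → (Fin (b+1) → G) → k} (hw : D.Inv w)
    (h : dd (a+1) w = 0) : ∃ v : (Fin a → Q) → (Fin (b+1) → G) → k, D.Inv v ∧ dd a v = w := by
  refine ⟨fun x y => w (Fin.cons (D.π (y 0)) x) y, ?_, ?_⟩
  · intro g x y
    have := hw g (Fin.cons (D.π (y 0)) x) y
    rw [cons_map (fun z => D.π g * z)] at this
    simpa using this
  · funext x y
    have h1 := congrFun (congrFun h (Fin.cons (D.π (y 0)) x)) y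
    simp only [dd, Fin.tail_cons, Fin.cons_zero, Pi.zero_apply, Pi.sub_apply] at h1
    have h2 := fun y' => dd_map (Pi.evalAddMonoidHom (fun _ : Fin (b+1) → G => k) y') a (E := Q)
    simp only [Pi.evalAddMonoidHom_apply] at h2
    rw [h2] at h1 ⊢
    exact (sub_eq_zero.1 h1).symm

variable (D) in
/-- N-invariant cocycles on G -/
def IsN {b : ℕ} (f : (Fin (b+1) → G) → k) : Prop :=
  (∀ n y, f (fun i => D.ι n * y i) = f y) ∧ dd (b+1) f = 0

lemma IsN.mem {b : ℕ} {f : (Fin (b+1) → G) → k} (hf : D.IsN f) :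
    (fun y => f (fun i => D.ι (y i))) ∈ Zc k N b := by
  refine ⟨fun g y => ?_, ?_⟩
  · simp only [map_mul]; exact hf.1 _ _
  · funext y
    rw [← dd_comp D.ι, hf.2]; rfl

/-- restriction class on N -/
noncomputable def cN {b : ℕ} {f : (Fin (b+1) → G) → k} (hf : D.IsN f) : H k N b :=
  cls k _ hf.mem

lemma Inv.isN {a b : ℕ} {w : (Fin a → Q) → (Fin (b+1) → G) → k} (hw : D.Inv w)
    (h : (fun x => dd (b+1) (w x)) = 0) (x) : D.IsN (w x) := by
  refine ⟨fun n y => ?_, congrFun h x⟩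
  have := hw (D.ι n) x y
  simpa [D.kerι] using this

lemma IsN.eL {b : ℕ} {f : (Fin (b+1) → G) → k} (hf : D.IsN f) (l : List I) :
    D.IsN (D.eL l f) := by
  refine ⟨?_, by rw [dd_eL, hf.2, map_zero]⟩
  induction l with
  | nil => exact hf.1
  | cons i l ih =>
    intro n y
    simp only [LD.eL, op, AddMonoidHom.comp_apply, AddMonoidHom.coe_mk, ZeroHom.coe_mk, map_mul,
      ← D.comp]
    rw [ih, ih]

variable (D) in
/-- e on cohomology of N -/
noncomputable def eH {b : ℕ} : List I → H k N b → H k N b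
  | [], x => x
  | i :: l, x => eH l x - res (D.φN i) (eH l x)

lemma cN_eL {b : ℕ} {f : (Fin (b+1) → G) → k} (hf : D.IsN f) : ∀ l : List I,
    cN (hf.eL l) = D.eH l (cN hf)
  | [] => rfl
  | i :: l => by
    rw [eH, ← cN_eL hf l]
    unfold cN
    rw [res_cls, ← cls_sub]
    congr 1
    funext y
    simp [LD.eL, op, D.comp]

lemma eH_killed {b : ℕ} (x : H k N b) : ∀ (l : List I) (j : I), j ∈ l →
    res (D.φN j) (D.eH l x) = 0
  | [], j, h => by simp at h
  | i :: l, j, h => by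
    rw [eH, map_sub]
    by_cases hj : j = i
    · subst hj
      rw [res_res, res_eq_of_comp ((D.φN j).comp (D.φN j)) (D.φN j) (fun n => D.idem j n), sub_self]
    · have hj : j ∈ l := by simpa [hj] using h
      rw [eH_killed x l j hj, res_res,
        res_eq_of_comp ((D.φN i).comp (D.φN j)) ((D.φN j).comp (D.φN i)) (fun n => D.comm i j n),
        ← res_res, eH_killed x l j hj]
      simp

/-- vertical exactness -/
lemma vert {a b : ℕ} {w : (Fin (a+1) → Q) → (Fin (b+1) → G) → k} (hw : D.Inv w)
    (h : (fun x => dd (b+1) (w x)) = 0) (h0 : ∀ x, cN (hw.isN h x) = 0) :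
    ∃ u : (Fin (a+1) → Q) → (Fin b → G) → k, D.Inv u ∧ (fun x => dd b (u x)) = w := by
  have h1 : ∀ x, ∃ u : (Fin b → G) → k, (∀ g y, u (fun i => D.ι g * y i) = u y) ∧ dd b u = w x := by
    intro x
    obtain ⟨u0, hu0, hd⟩ := (cls_eq_zero _ _).1 (h0 x)
    exact restr D.ι D.inj _ (hw.isN h x).1 (hw.isN h x).2 u0 hu0 (fun y => congrFun hd y)
  choose u hu hd using h1
  choose s hs using D.surj
  refine ⟨fun x y => u (fun i => D.π (s (x 0))⁻¹ * x i) (fun i => (s (x 0))⁻¹ * y i), ?_, ?_⟩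
  · intro g x y
    simp only
    obtain ⟨n, hn⟩ := D.ker ((s (D.π g * x 0))⁻¹ * g * s (x 0)) (by simp [hs])
    have e1 : (fun i => D.π (s (D.π g * x 0))⁻¹ * (D.π g * x i)) =
        fun i => D.π (s (x 0))⁻¹ * x i := by
      funext i
      simp [hs, mul_assoc]
    have e2 : (fun i => (s (D.π g * x 0))⁻¹ * (g * y i)) =
        fun i => D.ι n * ((s (x 0))⁻¹ * y i) := by
      funext i; rw [hn]; group
    rw [e1, e2, hu]
  · funext x y
    simp only
    rw [← dd_comp (fun z => (s (x 0))⁻¹ * z), hd, hw]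

variable (D) in
/-- vanishing hypothesis -/
def Van (k : Type) [Field k] (b : ℕ) : Prop :=
  ∀ b' < b, ∀ f : H k N b', (∀ i, res (D.φN i) f = 0) → f = 0

lemma eL_append {b : ℕ} (f : (Fin b → G) → k) : ∀ (l l' : List I),
    D.eL (l ++ l') f = D.eL l (D.eL l' f)
  | [], l' => rfl
  | i :: l, l' => by simp [LD.eL, eL_append f l l']

theorem mainB : ∀ (b : ℕ) (_ : D.Van k b) (a : ℕ) (w : (Fin (a+1) → Q) → (Fin (b+1) → G) → k)
    (hw : D.Inv w) (_ : dd (a+1) w = 0) (hv : (fun x => dd (b+1) (w x)) = 0)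
    (_ : ∀ x, D.eH D.l (cN (hw.isN hv x)) = 0),
    ∃ (L : List I) (v : (Fin a → Q) → (Fin b → G) → k), D.Inv v ∧
      (fun x => dd b (dd a v x)) = fun x => D.eL L (w x)
  | 0, _, a, w, hw, hd, hv, h0 => by
    refine ⟨[D.i0], 0, fun _ _ _ => rfl, ?_⟩
    have hc : ∀ x y y', w x y = w x y' := by
      intro x y y'
      have := congrFun (congrFun hv x) (Fin.cons (y' 0) y)
      simp only [dd, Fin.tail_cons, Fin.cons_zero, Pi.zero_apply] at this
      rw [sub_eq_zero] at this
      rw [this]; congr 1; funext i; fin_cases i; rfl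
    funext x y
    rw [dd_zero]
    have : (0 : (Fin (a+1) → Q) → (Fin 0 → G) → k) x = 0 := rfl
    rw [this, dd_zero]
    simp only [LD.eL, op, AddMonoidHom.comp_apply, AddMonoidHom.coe_mk, ZeroHom.coe_mk,
      AddMonoidHom.id_apply]
    rw [hc x y (fun i => D.φG D.i0 (y i)), sub_self]; rfl
  | b+1, hV, a, w, hw, hd, hv, h0 => by
    have hev : (fun x => dd (b+1+1) (D.eL D.l (w x))) = 0 := by
      funext x; rw [dd_eL]; have := congrFun hv x
      rw [this, Pi.zero_apply, map_zero]
    obtain ⟨u, hu, hdu⟩ := vert (hw.eL D.l) hev (fun x => by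
      rw [← h0 x, ← cN_eL (hw.isN hv x)])
    have hdu1 : (fun x => dd (b+1) (dd (a+1) u x)) = 0 := by
      rw [← del_dV, hdu, del_eL, hd]
      funext x; simp
    obtain ⟨L, v, hv', e⟩ := mainB b (fun b' hb' => hV b' (by omega)) (a+1) (dd (a+1) u) hu.del
      (dd_dd _ _) hdu1 (fun x => hV b (by omega) _ (fun i => eH_killed _ _ i (D.hl i)))
    have hF : D.Inv ((fun x => D.eL L (u x)) - fun x => dd b (v x)) := (hu.eL L).sub hv'.dV
    have hF0 : dd (a+1) ((fun x => D.eL L (u x)) - fun x => dd b (v x)) = 0 := by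
      rw [dd_sub, del_eL, del_dV, e, sub_self]
    obtain ⟨v', hv1, hv2⟩ := row hF hF0
    refine ⟨L ++ D.l, v', hv1, ?_⟩
    rw [hv2]
    funext x
    rw [eL_append, ← congrFun hdu x, Pi.sub_apply, dd_sub, dd_dd, dd_eL]; simp

lemma cls_eL {n : ℕ} (f : (Fin (n+1) → G) → k) (hf : f ∈ Zc k G n)
    (hx : ∀ i, res (D.φG i) (cls k f hf) = 0) : ∀ L, ∃ h, cls k (D.eL L f) h = cls k f hf
  | [] => ⟨hf, rfl⟩
  | i :: L => by
    obtain ⟨h, e⟩ := cls_eL f hf hx L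
    refine ⟨sub_mem h (comp_mem_Zc (D.φG i) h), ?_⟩
    refine (cls_sub _ _ h (comp_mem_Zc (D.φG i) h)).trans ?_
    rw [← res_cls _ _ h, e, hx, sub_zero]

lemma eH_zero {b : ℕ} : ∀ l : List I, D.eH l (0 : H k N b) = 0
  | [] => rfl
  | i :: l => by rw [eH, eH_zero l]; simp

theorem LHS1 {n : ℕ} (x : H k G n) (hx : ∀ i, res (D.φG i) x = 0) (hN : res D.ι x = 0)
    (hV : D.Van k n) : x = 0 := by
  obtain ⟨f, hf, rfl⟩ := cls_surj x
  have hw : D.Inv (fun (_ : Fin 1 → Q) => f) := fun g _ y => hf.1 g y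
  obtain ⟨L, v, hv, e⟩ := mainB n hV 0 (fun _ => f) hw (by funext x; simp [dd])
    (by funext x; exact hf.2) (fun x => by
      have : cN (hw.isN (by funext x; exact hf.2) x) = (0 : H k N n) := hN
      rw [this, eH_zero])
  obtain ⟨h, e'⟩ := cls_eL f hf hx L
  rw [← e', cls_eq_zero]
  refine ⟨v (Fin.elim0), fun g y => ?_, ?_⟩
  · rw [← hv g _ y]; congr 1; exact Subsingleton.elim _ _
  · have := congrFun e (fun _ => 1)
    simp only [dd] at this
    rw [← this]; congr 2; exact Subsingleton.elim _ _

theorem LHS2 {n : ℕ} (x : H k G n) (hx : ∀ i, res (D.φG i) x = 0) (hN : res D.ι x = 0)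
    (hV : D.Van k (n-1)) {Z : Type} [Group Z] (ζ : Z →* N)
    (hZ : ∀ f : H k N (n-1), (∀ i, res (D.φN i) f = 0) → res ζ f = 0 → f = 0)
    (hs : ∀ q, ∃ s, D.π s = q ∧ ∀ z, s * D.ι (ζ z) = D.ι (ζ z) * s)
    (hχ : ∀ χ : G → H k Z (n-1), (∀ g g', χ (g * g') = χ g + χ g') → (∀ n, χ (D.ι n) = 0) →
      ∀ g, χ g = 0) : x = 0 := by
  cases n with
  | zero => exact H_zero x
  | succ n =>
  simp only [Nat.add_sub_cancel] at hV hZ hχ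
  obtain ⟨f, hf, rfl⟩ := cls_surj x
  have hw : D.Inv (fun (_ : Fin 1 → Q) => f) := fun g _ y => hf.1 g y
  have hdw : (fun (x : Fin 1 → Q) => dd (n+1+1) f) = 0 := by funext x; exact hf.2
  obtain ⟨u0, hu0, hdu0⟩ := vert hw hdw (fun x => hN)
  set u := (fun x => D.eL D.l (u0 x)) with hu_def
  have hu : D.Inv u := hu0.eL D.l
  have hdu : (fun x => dd (n+1) (u x)) = fun x => D.eL D.l f := by
    funext x; rw [hu_def, dd_eL]; have := congrFun hdu0 x; rw [this]
  have hdu1 : (fun x => dd (n+1) (dd 1 u x)) = 0 := by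
    rw [← del_dV, hdu]
    funext x; simp [dd]
  have hdu10 : (fun x => dd (n+1) (dd 1 u0 x)) = 0 := by
    rw [← del_dV, hdu0]
    funext x; simp [dd]
  have hI := (hu.del).isN hdu1
  have hI0 := (hu0.del).isN hdu10
  let ω : (Fin 2 → Q) → H k Z n := fun x => res ζ (cN (hI x))
  have hωd : dd 2 ω = 0 := by
    let ZN : AddSubgroup ((Fin (n+1) → G) → k) :=
      { carrier := {f | D.IsN f}
        add_mem' := by
          rintro a b ⟨h1, h2⟩ ⟨h3, h4⟩
          exact ⟨fun n y => by simp [h1, h3], by rw [dd_add, h2, h4, add_zero]⟩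
        zero_mem' := ⟨fun _ _ => rfl, dd_zero _⟩
        neg_mem' := by
          rintro a ⟨h1, h2⟩
          exact ⟨fun n y => by simp [h1], by rw [dd_neg, h2, neg_zero]⟩ }
    let M : ZN →+ H k Z n := AddMonoidHom.mk' (fun f => res ζ (cN f.2)) (by
      rintro ⟨a, ha⟩ ⟨b, hb⟩
      rw [← map_add]; rfl)
    let w1 : (Fin 2 → Q) → ZN := fun x => ⟨dd 1 u x, hI x⟩
    have h1 : dd 2 w1 = 0 := by
      funext x
      apply Subtype.ext
      have := dd_map ZN.subtype 2 w1 x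
      rw [AddSubgroup.subtype_apply] at this
      rw [this]
      have h2 := congrFun (dd_dd 1 u) x
      exact h2
    funext x
    have := dd_map M 2 w1 x
    rw [h1] at this
    simp only [Pi.zero_apply, map_zero] at this
    exact this.symm
  have hωi : ∀ q x, ω (fun i => q * x i) = ω x := by
    intro q x
    obtain ⟨s, rfl, hs⟩ := hs q
    simp only [ω, cN]
    rw [res_cls, res_cls]
    apply cls_eq
    have hIx := hI x
    refine ⟨prism (fun z => D.ι (ζ z)) (fun z => D.ι (ζ z) * s⁻¹) n (dd 1 u x), ?_, ?_⟩
    · intro a y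
      rw [prism_nat _ _ (fun y => a * y) (fun y => D.ι (ζ a) * y) (by simp) (by simp [mul_assoc])]
      congr 1; funext y; exact hIx.1 _ _
    · funext y
      have := prism_id (fun z => D.ι (ζ z)) (fun z => D.ι (ζ z) * s⁻¹) n (dd 1 u x) y
      rw [hIx.2, prism_zero] at this
      simp only [Pi.zero_apply, add_zero] at this
      rw [this]
      simp only [Pi.sub_apply]
      congr 1
      rw [← hu.del s]
      refine congrArg _ ?_
      funext i
      rw [← mul_assoc, hs, mul_assoc, mul_inv_cancel, mul_one]
  have hω3 : ∀ a b c, ω ![a, b] + ω ![b, c] = ω ![a, c] := by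
    intro a b c
    have := congrFun hωd ![a, b, c]
    simp only [dd, Pi.zero_apply] at this
    have t1 : Fin.tail ![a, b, c] = ![b, c] := by funext i; fin_cases i <;> rfl
    have t2 : (Fin.cons (![a, b, c] 0) (Fin.tail ![b, c]) : Fin 2 → Q) = ![a, c] := by
      funext i; fin_cases i <;> rfl
    have t3 : ∀ z : Fin 0 → Q, (Fin.cons (![a, b, c] 0) (Fin.cons (![b, c] 0) z) : Fin 2 → Q)
       = ![a, b] := by
      intro z; funext i; fin_cases i <;> rfl
    rw [t1, t2, t3] at this
    rw [sub_sub_eq_add_sub, sub_eq_zero] at this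
    rw [add_comm]; exact this
  have hω1 : ∀ g a b, ω ![g * a, g * b] = ω ![a, b] := by
    intro g a b
    rw [← hωi g ![a, b]]
    congr 1; funext i; fin_cases i <;> rfl
  have hω0 : ∀ a, ω ![a, a] = 0 := by
    intro a; have := hω3 a a a; simpa using this
  have hχ0 := hχ (fun g => ω ![1, D.π g]) (by
    intro g g'
    rw [← hω3 1 (D.π g) (D.π (g * g'))]
    congr 1
    have := hω1 (D.π g) 1 (D.π g')
    rw [← this, mul_one, map_mul]) (by intro n; simp only [D.kerι]; exact hω0 1)
  have hω : ∀ x, ω x = 0 := by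
    intro x
    have e : x = ![x 0, x 1] := by funext i; fin_cases i <;> rfl
    obtain ⟨g, hg⟩ := D.surj ((x 0)⁻¹ * x 1)
    rw [e]
    have h1 := hω1 (x 0) 1 (D.π g)
    rw [hg] at h1
    simp only [mul_one, mul_inv_cancel_left] at h1
    rw [h1, ← hg]; exact hχ0 g
  have hcl : ∀ x, cN (hI x) = 0 := by
    intro x
    refine hZ _ (fun i => ?_) (hω x)
    have : cN (hI x) = D.eH D.l (cN (hI0 x)) := by
      rw [← cN_eL]
      unfold cN
      congr 1
      rw [hu_def, del_eL]
    rw [this]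
    exact eH_killed _ _ i (D.hl i)
  obtain ⟨L, v, hv, e⟩ := mainB n hV 1 (dd 1 u) hu.del (dd_dd _ _) hdu1
    (fun x => by rw [hcl, eH_zero])
  have hF : D.Inv ((fun x => D.eL L (u x)) - fun x => dd n (v x)) := (hu.eL L).sub hv.dV
  have hF0 : dd 1 ((fun x => D.eL L (u x)) - fun x => dd n (v x)) = 0 := by
    rw [dd_sub, del_eL, del_dV, e, sub_self]
  obtain ⟨v', hv1, hv2⟩ := row hF hF0
  obtain ⟨h, e'⟩ := cls_eL f hf hx (L ++ D.l)
  rw [← e', cls_eq_zero]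
  refine ⟨v' (Fin.elim0), fun g y => ?_, ?_⟩
  · rw [← hv1 g _ y]; congr 1; exact Subsingleton.elim _ _
  · have h1 := congrFun hv2 (fun _ => 1)
    simp only [dd] at h1
    have h2 : v' Fin.elim0 = v' (Fin.tail fun x : Fin 1 => (1:Q)) := by
      congr 1; exact Subsingleton.elim _ _
    rw [h2]
    refine (congrArg (dd (n+1)) h1).trans ?_
    rw [Pi.sub_apply, dd_sub, dd_dd, dd_eL, eL_append]
    have := congrFun hdu (fun _ => 1)
    rw [this, sub_zero]

end LD
end Coh

namespace Coh

/-- parabolic type groups -/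
@[ext] structure QG (F Γ V κ τ : Type) [Field F] (b : κ → τ) where
  A : Γ
  X : κ → V
  t : τ → Fˣ

namespace QG
variable {F Γ V κ τ : Type} [Field F] {b : κ → τ} [Group Γ] [AddCommGroup V] [Module F V]
  [DistribMulAction Γ V] [SMulCommClass Γ F V]

instance : Mul (QG F Γ V κ τ b) :=
  ⟨fun g h => ⟨g.A * h.A, fun c => g.A • h.X c + h.t (b c) • g.X c, g.t * h.t⟩⟩
instance : One (QG F Γ V κ τ b) := ⟨⟨1, 0, 1⟩⟩
instance : Inv (QG F Γ V κ τ b) :=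
  ⟨fun g => ⟨g.A⁻¹, fun c => - ((g.t (b c))⁻¹ • (g.A⁻¹ • g.X c)), g.t⁻¹⟩⟩

@[simp] lemma mul_A (g h : QG F Γ V κ τ b) : (g * h).A = g.A * h.A := rfl
@[simp] lemma mul_X (g h : QG F Γ V κ τ b) (c : κ) :
    (g * h).X c = g.A • h.X c + h.t (b c) • g.X c := rfl
@[simp] lemma mul_t (g h : QG F Γ V κ τ b) : (g * h).t = g.t * h.t := rfl
@[simp] lemma one_A : (1 : QG F Γ V κ τ b).A = 1 := rfl
@[simp] lemma one_X (c : κ) : (1 : QG F Γ V κ τ b).X c = 0 := rfl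
@[simp] lemma one_t : (1 : QG F Γ V κ τ b).t = 1 := rfl
@[simp] lemma inv_A (g : QG F Γ V κ τ b) : (g⁻¹).A = g.A⁻¹ := rfl
@[simp] lemma inv_X (g : QG F Γ V κ τ b) (c : κ) :
    (g⁻¹).X c = - ((g.t (b c))⁻¹ • (g.A⁻¹ • g.X c)) := rfl
@[simp] lemma inv_t (g : QG F Γ V κ τ b) : (g⁻¹).t = g.t⁻¹ := rfl

lemma ext' {g h : QG F Γ V κ τ b} (h1 : g.A = h.A) (h2 : ∀ c, g.X c = h.X c)
    (h3 : ∀ β, g.t β = h.t β) : g = h := QG.ext h1 (funext h2) (funext h3)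

instance : Group (QG F Γ V κ τ b) := Group.ofLeftAxioms
  (by
    intro x y z
    apply ext'
    · simp [mul_assoc]
    · intro c
      simp only [mul_X, mul_A, mul_t, smul_add, Pi.mul_apply, mul_smul, add_assoc]
      congr 2
      · exact (smul_comm _ _ _).symm
      · exact smul_comm _ _ _
    · simp [mul_assoc])
  (by
    intro x
    apply ext' <;> simp)
  (by
    intro x
    apply ext'
    · simp
    · intro c
      simp only [mul_X, inv_A, inv_X, one_X]
      rw [smul_neg, smul_inv_smul, add_neg_cancel]
    · simp)

instance [Finite Γ] [Finite V] [Finite κ] [Finite τ] [Finite F] : Finite (QG F Γ V κ τ b) :=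
  Finite.of_injective (fun g => (g.A, g.X, g.t)) (by
    intro g h e
    simp only [Prod.mk.injEq] at e
    exact QG.ext e.1 e.2.1 e.2.2)

open Classical in
/-- deletion of columns -/
noncomputable def del (U : κ → Prop) : QG F Γ V κ τ b →* QG F Γ V κ τ b :=
  MonoidHom.mk' (fun g => ⟨g.A, fun c => if U c then 0 else g.X c, g.t⟩) (by
    intro g h
    apply ext'
    · simp
    · intro c
      simp only [mul_X, mul_A, mul_t]
      split_ifs <;> simp
    · simp)

@[simp] lemma del_A (U : κ → Prop) (g : QG F Γ V κ τ b) : (del U g).A = g.A := rfl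
open Classical in
@[simp] lemma del_X (U : κ → Prop) (g : QG F Γ V κ τ b) (c : κ) :
    (del U g).X c = if U c then 0 else g.X c := rfl
@[simp] lemma del_t (U : κ → Prop) (g : QG F Γ V κ τ b) : (del U g).t = g.t := rfl

end QG

section top
variable {k : Type} [Field k]

open Classical in
/-- deletion on the additive group -/
noncomputable def dela {κ V : Type} [AddCommGroup V] (U : κ → Prop) :
    Multiplicative (κ → V) →* Multiplicative (κ → V) :=
  AddMonoidHom.toMultiplicative
    { toFun := fun X c => if U c then 0 else X c
      map_zero' := by funext c; simp
      map_add' := by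
        intro X Y; funext c; simp only [Pi.add_apply]; split_ifs <;> simp }

open Classical in
lemma dela_apply {κ V : Type} [AddCommGroup V] (U : κ → Prop) (X : Multiplicative (κ → V)) (c : κ) :
    (Multiplicative.toAdd (dela U X)) c = if U c then 0 else Multiplicative.toAdd X c := rfl

lemma mext {κ V : Type} {X Y : Multiplicative (κ → V)}
    (h : ∀ c, (Multiplicative.toAdd X) c = (Multiplicative.toAdd Y) c) : X = Y :=
  Multiplicative.toAdd.injective (funext h)

open Classical in
/-- inclusion of columns -/
noncomputable def incla {κ V : Type} [AddCommGroup V] (U : κ → Prop) :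
    Multiplicative ({c // U c} → V) →* Multiplicative (κ → V) :=
  AddMonoidHom.toMultiplicative
    { toFun := fun X c => if h : U c then X ⟨c, h⟩ else 0
      map_zero' := by funext c; simp
      map_add' := by
        intro X Y; funext c; simp only [Pi.add_apply]; split_ifs <;> simp }

open Classical in
lemma incla_apply {κ V : Type} [AddCommGroup V] (U : κ → Prop) (X : Multiplicative ({c // U c} → V))
    (c : κ) : (Multiplicative.toAdd (incla U X)) c =
      if h : U c then Multiplicative.toAdd X ⟨c, h⟩ else 0 := rfl

/-- restriction to columns -/
noncomputable def resta {κ V : Type} [AddCommGroup V] (U : κ → Prop) :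
    Multiplicative (κ → V) →* Multiplicative ({c // U c} → V) :=
  AddMonoidHom.toMultiplicative
    { toFun := fun X c => X c.1
      map_zero' := rfl
      map_add' := fun _ _ => rfl }

lemma resta_apply {κ V : Type} [AddCommGroup V] (U : κ → Prop) (X : Multiplicative (κ → V))
    (c : {c // U c}) : (Multiplicative.toAdd (resta U X)) c = Multiplicative.toAdd X c.1 := rfl

theorem topA {V γ : Type} [AddCommGroup V] : ∀ (m : ℕ) (I : Finset γ), I.card = m →
    ∀ {κ : Type} (p : κ → γ), (∀ c, p c ∈ I) → ∀ (D : ℕ), D < m →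
    ∀ x : H k (Multiplicative (κ → V)) D, (∀ i ∈ I, res (dela (fun c => p c = i)) x = 0) → x = 0 := by
  classical
  intro m
  induction m with
  | zero => intro I hI κ p hp D hD; omega
  | succ m ih =>
  intro I hI κ p hp D hD x hx
  rcases Nat.eq_zero_or_pos D with h0 | h0
  · subst h0; exact H_zero x
  have hne : I.Nonempty := by rw [← Finset.card_pos]; omega
  obtain ⟨i, hi⟩ := hne
  have hcard : (I.erase i).card = m := by rw [Finset.card_erase_of_mem hi]; omega
  obtain ⟨j0, hj0⟩ : (I.erase i).Nonempty := by rw [← Finset.card_pos]; omega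
  let L : LD (Multiplicative (κ → V)) (Multiplicative ({c // p c ≠ i} → V))
      (Multiplicative ({c // p c = i} → V)) {j // j ∈ I.erase i} :=
    { ι := incla _
      inj := by
        intro X Y h
        apply mext
        intro c
        have := congrFun (congrArg Multiplicative.toAdd h) c.1
        simpa [incla_apply, c.2] using this
      π := resta _
      surj := by
        intro Y
        refine ⟨incla _ Y, ?_⟩
        apply mext
        intro c
        simp [incla_apply, resta_apply, c.2]
      ker := by
        intro g hg
        refine ⟨resta _ g, ?_⟩
        apply mext
        intro c
        rw [incla_apply]
        by_cases hc : p c = i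
        · have := congrFun (congrArg Multiplicative.toAdd hg) ⟨c, hc⟩
          rw [resta_apply] at this
          simp [hc, this]
        · simp [hc, resta_apply]
      kerι := by
        intro n
        apply mext
        intro c
        simp [incla_apply, resta_apply, c.2]
      φG := fun j => dela (fun c => p c = j.1)
      φN := fun j => dela (fun c => p c.1 = j.1)
      comp := by
        intro j n
        apply mext
        intro c
        simp only [incla_apply, dela_apply]
        split_ifs <;> simp_all
      πφ := by
        intro j g
        apply mext
        intro c
        simp only [resta_apply, dela_apply]
        have : p c.1 ≠ j.1 := by rw [c.2]; exact (Finset.ne_of_mem_erase j.2).symm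
        simp [this]
      idem := by
        intro j n
        apply mext
        intro c
        simp only [dela_apply]
        split_ifs <;> simp_all
      comm := by
        intro j j' n
        apply mext
        intro c
        simp only [dela_apply]
        split_ifs <;> simp_all
      i0 := ⟨j0, hj0⟩
      l := (I.erase i).attach.toList
      hl := by intro j; simp }
  have hNr : ∀ j, res (dela (fun c => p c = j)) (res (MonoidHom.id _) x) = 0 → True := fun _ _ => trivial
  refine LD.LHS1 (D := L) x (fun j => hx j.1 (Finset.mem_of_mem_erase j.2)) ?_ ?_
  · have h1 := congrArg (res L.ι) (hx i hi)
    rw [res_res, map_zero] at h1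
    rw [← h1]
    apply res_eq_of_comp
    intro X
    apply mext
    intro c
    simp only [L, MonoidHom.comp_apply, dela_apply, incla_apply]
    split_ifs <;> simp_all
  · intro a ha f hf
    exact ih (I.erase i) hcard (fun c : {c // p c ≠ i} => p c.1)
      (fun c => Finset.mem_erase.2 ⟨c.2, hp _⟩) a (by omega) f (fun j hj => hf ⟨j, hj⟩)

variable {F Γ V κ τ γ : Type} [Field F] {b : κ → τ} [Group Γ] [AddCommGroup V] [Module F V]
  [DistribMulAction Γ V] [SMulCommClass Γ F V]

theorem top0 (p : κ → γ) (I : Finset γ) (hp : ∀ c, p c ∈ I) (D : ℕ) (hD : D < I.card)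
    (x : H k (QG F Γ V κ τ b) D)
    (hx : ∀ i ∈ I, res (QG.del (fun c => p c = i)) x = 0) : x = 0 := by
  classical
  obtain ⟨j0, hj0⟩ : I.Nonempty := by rw [← Finset.card_pos]; omega
  let L : LD (QG F Γ V κ τ b) (Multiplicative (κ → V)) (Γ × (τ → Fˣ)) {j // j ∈ I} :=
    { ι := MonoidHom.mk' (fun X => ⟨1, Multiplicative.toAdd X, 1⟩) (by
        intro X Y
        apply QG.ext'
        · simp
        · intro c; simp [add_comm]
        · simp)
      inj := by
        intro X Y h
        have := congrArg QG.X h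
        exact Multiplicative.toAdd.injective this
      π := MonoidHom.mk' (fun g => (g.A, g.t)) (by intro X Y; simp)
      surj := fun y => ⟨⟨y.1, 0, y.2⟩, rfl⟩
      ker := by
        intro g hg
        refine ⟨Multiplicative.ofAdd g.X, ?_⟩
        simp only [MonoidHom.mk'_apply, Prod.mk_eq_one] at hg
        apply QG.ext'
        · simp [hg.1]
        · intro c; simp
        · simp [hg.2]
      kerι := by intro n; rfl
      φG := fun j => QG.del (fun c => p c = j.1)
      φN := fun j => dela (fun c => p c = j.1)
      comp := by
        intro j n
        apply QG.ext'
        · simp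
        · intro c; simp [dela_apply]
        · simp
      πφ := by
        intro j g
        rfl
      idem := by
        intro j n
        apply mext
        intro c
        simp only [dela_apply]
        split_ifs <;> simp_all
      comm := by
        intro j j' n
        apply mext
        intro c
        simp only [dela_apply]
        split_ifs <;> simp_all
      i0 := ⟨j0, hj0⟩
      l := I.attach.toList
      hl := by intro j; simp }
  refine LD.LHS1 (D := L) x (fun j => hx j.1 j.2) ?_ ?_
  · refine topA I.card I rfl p hp D hD _ ?_
    intro i hi
    have h1 := congrArg (res L.ι) (hx i hi)
    rw [res_res, map_zero] at h1
    rw [res_res, ← h1]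
    apply res_eq_of_comp
    intro X
    exact L.comp ⟨i, hi⟩ X
  · intro a ha f hf
    exact topA I.card I rfl p hp a (by omega) f (fun j hj => hf ⟨j, hj⟩)

open Classical in
/-- scaling of a block -/
noncomputable def scal (β : τ) (lam : F) : QG F Γ V κ τ b →* QG F Γ V κ τ b :=
  MonoidHom.mk' (fun g => ⟨g.A, fun c => if b c = β then lam • g.X c else g.X c, g.t⟩) (by
    intro g h
    apply QG.ext'
    · simp
    · intro c
      simp only [QG.mul_X, QG.mul_A, QG.mul_t]
      split_ifs
      · rw [smul_add, smul_comm g.A, smul_comm lam (h.t (b c))]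
      · rfl
    · simp)

lemma res_scal (β : τ) (lam : F) (hl : lam ≠ 0) {D : ℕ} (x : H k (QG F Γ V κ τ b) D) :
    res (scal β lam) x = x := by
  classical
  conv_rhs => rw [← res_id x]
  apply res_conj _ _ (⟨1, 0, fun β' => if β' = β then Units.mk0 lam hl else 1⟩ : QG F Γ V κ τ b)
  intro g
  apply QG.ext'
  · simp [scal]
  · intro c
    simp only [scal, QG.mul_X, MonoidHom.mk'_apply, MonoidHom.id_apply, Pi.zero_apply, smul_zero,
      add_zero, one_smul, zero_add]
    split_ifs
    · rfl
    · simp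
  · simp [scal, mul_comm]

open Classical in
/-- add up copies -/
noncomputable def addS {ι : Type} (i0 : ι) (β0 : τ) (S : Finset ι) :
    QG F Γ V (κ × ι) τ (fun c => b c.1) →* QG F Γ V κ τ b :=
  MonoidHom.mk' (fun g => ⟨g.A, fun c => if b c = β0 then ∑ i ∈ S, g.X (c, i) else g.X (c, i0), g.t⟩) (by
    intro g h
    apply QG.ext'
    · simp
    · intro c
      simp only [QG.mul_X, QG.mul_A, QG.mul_t]
      split_ifs
      · rw [Finset.sum_add_distrib, Finset.smul_sum, Finset.smul_sum]
      · rfl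
    · simp)

open Classical in
/-- diagonal -/
noncomputable def diagv {ι : Type} (β0 : τ) (v : ι → F) :
    QG F Γ V κ τ b →* QG F Γ V (κ × ι) τ (fun c => b c.1) :=
  MonoidHom.mk' (fun g => ⟨g.A, fun c => if b c.1 = β0 then v c.2 • g.X c.1 else g.X c.1, g.t⟩) (by
    intro g h
    apply QG.ext'
    · simp
    · intro c
      simp only [QG.mul_X, QG.mul_A, QG.mul_t]
      split_ifs
      · rw [smul_add, smul_comm g.A, smul_comm (v c.2) (h.t (b c.1))]
      · rfl
    · simp)

theorem lemmaP {ι : Type} [Fintype ι] (i0 : ι) (v : ι → F)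
    (hv : ∀ S : Finset ι, S.Nonempty → ∑ i ∈ S, v i ≠ 0)
    (T : Finset τ) (hT : ∀ c, b c ∈ T) (β0 : τ) (hβ0 : β0 ∈ T) (D : ℕ)
    (hD : D + 1 < T.card + Fintype.card ι) (x : H k (QG F Γ V κ τ b) D)
    (hx : ∀ β ∈ T, res (QG.del (fun c => b c = β)) x = 0) : x = 0 := by
  classical
  have key : ∑ S ∈ (Finset.univ : Finset ι).powerset, (-1 : k) ^ S.card •
      res (addS (b := b) (V := V) (Γ := Γ) (F := F) i0 β0 S) x = 0 := by
    refine top0 (fun c : κ × ι => if b c.1 = β0 then (Sum.inr c.2 : τ ⊕ ι) else Sum.inl (b c.1))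
      ((T.erase β0).disjSum Finset.univ) ?_ D ?_ _ ?_
    · intro c
      split_ifs with h
      · simp
      · simp [h, hT]
    · rw [Finset.card_disjSum, Finset.card_erase_of_mem hβ0, Finset.card_univ]
      have : 0 < T.card := Finset.card_pos.2 ⟨_, hβ0⟩
      omega
    · intro i hi
      rw [map_sum]
      rcases i with β | i
      · simp only [Finset.inl_mem_disjSum, Finset.mem_erase] at hi
        apply Finset.sum_eq_zero
        intro S _
        rw [map_smul, res_res,
          res_eq_of_comp _ ((QG.del (fun c => b c = β)).comp (addS i0 β0 S)), ← res_res,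
          hx β hi.2, map_zero, smul_zero]
        intro g
        apply QG.ext'
        · simp [addS]
        · intro c
          simp only [addS, MonoidHom.comp_apply, MonoidHom.mk'_apply, QG.del_X]
          by_cases h : b c = β0
          · have : β0 ≠ β := fun h => hi.1 h.symm
            simp [h, this]
          · simp [h]
        · simp [addS]
      · have e : ∀ S : Finset ι, res (QG.del fun c : κ × ι =>
            (if b c.1 = β0 then (Sum.inr c.2 : τ ⊕ ι) else Sum.inl (b c.1)) = Sum.inr i)
            ((-1 : k) ^ S.card • res (addS (b := b) (V := V) (Γ := Γ) (F := F) i0 β0 S) x) =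
            (-1 : k) ^ S.card • res (addS (b := b) (V := V) (Γ := Γ) (F := F) i0 β0 (S.erase i)) x := by
          intro S
          rw [map_smul, res_res]
          congr 1
          apply res_eq_of_comp
          intro g
          apply QG.ext'
          · simp [addS]
          · intro c
            simp only [addS, MonoidHom.comp_apply, MonoidHom.mk'_apply, QG.del_X]
            by_cases h : b c = β0
            · simp only [h, if_true, Sum.inr.injEq]
              rw [← Finset.filter_ne', Finset.sum_filter]
              apply Finset.sum_congr rfl
              intro j _
              by_cases hj : j = i <;> simp [hj]
            · simp [h]
          · simp [addS]
        simp only [e]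
        refine Finset.sum_involution (fun S _ => if i ∈ S then S.erase i else insert i S) ?_ ?_ ?_ ?_
        · intro S _
          by_cases h : i ∈ S
          · simp only [h, if_true, Finset.erase_idem]
            rw [← add_smul]
            have : S.card = (S.erase i).card + 1 := (Finset.card_erase_add_one h).symm
            rw [this, pow_succ]; simp
          · simp only [h, if_false]
            rw [Finset.erase_insert h, Finset.erase_eq_of_notMem h, ← add_smul,
              Finset.card_insert_of_notMem h, pow_succ]; simp
        · intro S _ _
          by_cases h : i ∈ S
          · simp only [h, if_true]
            intro h'; rw [← h'] at h; simp at h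
          · simp only [h, if_false]
            intro h'; apply h; rw [← h']; simp
        · intro S _; simp
        · intro S _
          by_cases h : i ∈ S
          · simp [h]
          · simp [h]
  have h2 := congrArg (res (diagv (b := b) (V := V) (Γ := Γ) β0 v)) key
  rw [map_zero, map_sum] at h2
  have h3 : ∀ S : Finset ι, res (diagv (b := b) (V := V) (Γ := Γ) β0 v)
      ((-1 : k) ^ S.card • res (addS (b := b) (V := V) (Γ := Γ) (F := F) i0 β0 S) x) =
      (-1 : k) ^ S.card • x - if S = ∅ then x else 0 := by
    intro S
    rw [map_smul, res_res, res_eq_of_comp _ (scal β0 (∑ i ∈ S, v i))]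
    · by_cases h : S = ∅
      · subst h
        simp only [Finset.card_empty, pow_zero, one_smul, if_true, Finset.sum_empty, sub_self]
        rw [← hx β0 hβ0]
        apply res_eq_of_comp
        intro g
        apply QG.ext' <;> simp [scal]
      · rw [res_scal _ _ (hv S (Finset.nonempty_iff_ne_empty.2 h))]; simp [h]
    · intro g
      apply QG.ext'
      · simp [addS, diagv, scal]
      · intro c
        simp only [addS, diagv, scal, MonoidHom.comp_apply, MonoidHom.mk'_apply]
        by_cases h : b c = β0
        · simp [h, Finset.sum_smul]
        · simp [h]
      · simp [addS, diagv, scal]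
  simp only [h3, Finset.sum_sub_distrib] at h2
  rw [← Finset.sum_smul] at h2
  have h4 : ∑ S ∈ (Finset.univ : Finset ι).powerset, (-1 : k) ^ S.card = 0 := by
    have := Finset.sum_powerset_neg_one_pow_card_of_nonempty (x := (Finset.univ : Finset ι)) ⟨i0, by simp⟩
    have := congrArg (Int.cast : ℤ → k) this
    simpa using this
  rw [h4] at h2
  simpa using h2
end top

lemma exists_v (p r : ℕ) (hp : p.Prime) (F : Type) [Field F] [Fintype F]
    (hc : Fintype.card F = p ^ r) (hr : 1 ≤ r) :
    ∃ v : Fin r × Fin (p-1) → F, ∀ S : Finset (Fin r × Fin (p-1)), S.Nonempty → ∑ i ∈ S, v i ≠ 0 := by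
  classical
  haveI := Fact.mk hp
  haveI : CharP F p := by
    obtain ⟨q, hq⟩ := CharP.exists F
    obtain ⟨n, hqp, hn⟩ := FiniteField.card F q
    have : q = p := by
      have h1 : q ∣ p ^ r := by rw [← hc, hn]; exact dvd_pow_self _ n.ne_zero
      exact (Nat.prime_dvd_prime_iff_eq hqp hp).1 (hqp.dvd_of_dvd_pow h1)
    rw [← this]; exact hq
  letI := ZMod.algebra F p
  have hfin : Module.finrank (ZMod p) F = r := by
    have := Module.card_eq_pow_finrank (K := ZMod p) (V := F)
    rw [hc, ZMod.card] at this
    exact (Nat.pow_right_injective hp.two_le this).symm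
  let B := Module.finBasisOfFinrankEq (ZMod p) F hfin
  refine ⟨fun i => B i.1, ?_⟩
  rintro S ⟨⟨i, a⟩, hS⟩ h
  have h1 := congrArg (fun y => B.repr y i) h
  simp only [map_sum, Finsupp.coe_finset_sum, Finset.sum_apply, Module.Basis.repr_self, map_zero,
    Finsupp.coe_zero, Pi.zero_apply, Finsupp.single_apply] at h1
  rw [Finset.sum_boole] at h1
  rw [ZMod.natCast_eq_zero_iff] at h1
  have h2 : (S.filter (fun c => c.1 = i)).card ≤ p - 1 := by
    calc _ ≤ (Finset.univ : Finset (Fin (p-1))).card :=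
          Finset.card_le_card_of_injOn (fun c => c.2) (by simp) (by
            rintro ⟨a1, b1⟩ h1 ⟨a2, b2⟩ h2 h
            simp at h1 h2 h
            simp [h1.2, h2.2, h])
      _ = p - 1 := by simp
  have h3 : 0 < (S.filter (fun c => c.1 = i)).card :=
    Finset.card_pos.2 ⟨(i, a), by simp [hS]⟩
  have := Nat.le_of_dvd h3 h1
  have := hp.two_le
  omega

end Coh

namespace Coh

lemma transfer_ker {k G G' M : Type} [Field k] [Group G] [Group G'] [Group M] [Finite G] [Finite M]
    (ι : G' →* G) (hι : Function.Injective ι) (χ : G →* M) (hM : (Nat.card M : k) ≠ 0)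
    (h : ∀ g, χ g = 1 → ∃ s, ι s = g) {n : ℕ} (x : H k G n) (hx : res ι x = 0) : x = 0 := by
  refine transfer ι hι ?_ x hx
  have h1 : ι.range.index ∣ Nat.card M := by
    have : χ.ker ≤ ι.range := by
      intro g hg
      exact h g hg
    refine (Subgroup.index_dvd_of_le this).trans ?_
    rw [Subgroup.index_ker]
    exact Subgroup.card_subgroup_dvd_card _
  obtain ⟨c, hc⟩ := h1
  intro h0
  apply hM
  rw [hc, Nat.cast_mul, h0, zero_mul]

/-- functoriality in the pair (group, module) -/
def QG.mapG {F Γ V Γ' V' κ τ : Type} [Field F] {b : κ → τ} [Group Γ] [AddCommGroup V] [Module F V]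
    [DistribMulAction Γ V] [SMulCommClass Γ F V] [Group Γ'] [AddCommGroup V'] [Module F V']
    [DistribMulAction Γ' V'] [SMulCommClass Γ' F V'] (φ : Γ →* Γ') (L : V →ₗ[F] V')
    (h : ∀ g v, L (g • v) = φ g • L v) : QG F Γ V κ τ b →* QG F Γ' V' κ τ b :=
  MonoidHom.mk' (fun g => ⟨φ g.A, fun c => L (g.X c), g.t⟩) (by
    intro g g'
    apply QG.ext'
    · simp
    · intro c
      simp only [QG.mul_X, map_add, h, Units.smul_def, map_smul]
    · simp)

/-- general linear group -/
abbrev GLV (F V : Type) [Field F] [AddCommGroup V] [Module F V] : Type := V ≃ₗ[F] V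

/-- conjugation -/
def conjE {F V V₁ : Type} [Field F] [AddCommGroup V] [Module F V] [AddCommGroup V₁] [Module F V₁]
    (e : V ≃ₗ[F] V₁) : GLV F V →* GLV F V₁ :=
  MonoidHom.mk' (fun g => (e.symm.trans g).trans e) (by
    intro g h
    ext v
    simp [LinearEquiv.mul_apply])

lemma conjE_apply {F V V₁ : Type} [Field F] [AddCommGroup V] [Module F V] [AddCommGroup V₁]
    [Module F V₁] (e : V ≃ₗ[F] V₁) (g : GLV F V) (v : V₁) : conjE e g v = e (g (e.symm v)) := rfl

/-- the parabolic acting on V × F -/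
abbrev PG (F Γ V : Type) [Field F] : Type := QG F Γ V Unit Unit id

section PG
variable {F Γ V : Type} [Field F] [Group Γ] [AddCommGroup V] [Module F V]
  [DistribMulAction Γ V] [SMulCommClass Γ F V]

instance : SMul (PG F Γ V) (V × F) :=
  ⟨fun g w => (g.A • w.1 + w.2 • g.X (), g.t () • w.2)⟩

lemma PG_smul (g : PG F Γ V) (w : V × F) :
    g • w = (g.A • w.1 + w.2 • g.X (), g.t () • w.2) := rfl

@[simp] lemma PG_smul_fst (g : PG F Γ V) (w : V × F) :
    (g • w).1 = g.A • w.1 + w.2 • g.X () := rfl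
@[simp] lemma PG_smul_snd (g : PG F Γ V) (w : V × F) :
    (g • w).2 = g.t () • w.2 := rfl

instance : DistribMulAction (PG F Γ V) (V × F) where
  one_smul w := by ext <;> simp
  mul_smul g h w := by
    ext
    · simp only [PG_smul_fst, PG_smul_snd, QG.mul_A, QG.mul_X, mul_smul, smul_add, id, smul_eq_mul,
        Units.smul_def, add_assoc]
      rw [smul_comm g.A w.2, smul_comm w.2 (↑(h.t ()) : F)]
    · simp [mul_smul]
  smul_zero g := by ext <;> simp
  smul_add g v w := by
    ext
    · simp only [PG_smul_fst, Prod.fst_add, Prod.snd_add, smul_add, add_smul]; abel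
    · simp

instance : SMulCommClass (PG F Γ V) F (V × F) where
  smul_comm g a w := by
    ext
    · simp only [PG_smul_fst, Prod.smul_fst, Prod.smul_snd, smul_add, smul_eq_mul, mul_smul]
      rw [smul_comm g.A a]
    · simp only [PG_smul_snd, Prod.smul_snd, smul_eq_mul, Units.smul_def]; ring

end PG

section fin
variable {F : Type} [Field F] [Finite F]

instance (V : Type) [AddCommGroup V] [Module F V] [Finite V] : Finite (GLV F V) :=
  Finite.of_injective (fun g : GLV F V => (g : V → V)) DFunLike.coe_injective

lemma card_GLV (V : Type) [AddCommGroup V] [Module F V] [Finite V] (n : ℕ)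
    (hn : Module.finrank F V = n) :
    Nat.card (GLV F V) = ∏ i : Fin n, (Nat.card F ^ n - Nat.card F ^ (i : ℕ)) := by
  haveI := Fintype.ofFinite F
  let B := Module.finBasisOfFinrankEq F V hn
  rw [Nat.card_eq_fintype_card (α := F), ← Matrix.card_GL_field n]
  exact (Nat.card_congr ((Matrix.GeneralLinearGroup.toLin' B).trans
    (LinearMap.GeneralLinearGroup.generalLinearEquiv F V)).toEquiv).symm

variable {V : Type} [AddCommGroup V] [Module F V]

/-- the parabolic inside GL -/
def pToGL (F V : Type) [Field F] [AddCommGroup V] [Module F V] :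
    PG F (GLV F V) V →* GLV F (V × F) := DistribMulAction.toModuleAut F (V × F)

lemma pToGL_apply {F V : Type} [Field F] [AddCommGroup V] [Module F V]
    (g : PG F (GLV F V) V) (w : V × F) : pToGL F V g w = g • w := rfl

lemma pToGL_inj (F V : Type) [Field F] [AddCommGroup V] [Module F V] :
    Function.Injective (pToGL F V) := by
  intro g h e
  have e1 : ∀ w : V × F, g • w = h • w := fun w => by
    rw [← pToGL_apply, ← pToGL_apply, e]
  apply QG.ext'
  · ext v
    have := congrArg Prod.fst (e1 (v, 0))
    simpa using this
  · intro c
    have := congrArg Prod.fst (e1 (0, 1))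
    simpa using this
  · intro β
    have := congrArg Prod.snd (e1 (0, 1))
    ext
    simpa [Units.smul_def] using this

lemma pToGL_index {k : Type} [Field k] (hk : (Nat.card F : k) = 0) [Finite V] :
    ((pToGL F V).range.index : k) ≠ 0 := by
  set n := Module.finrank F V with hn
  set q := Nat.card F with hq
  have hq1 : 1 < q := Finite.one_lt_card
  have hW : Module.finrank F (V × F) = n + 1 := by
    haveI : Module.Finite F V := Module.Finite.of_finite
    rw [Module.finrank_prod, Module.finrank_self]
  have hV : Nat.card V = q ^ n := by
    exact Module.natCard_eq_pow_finrank
  have hP : Nat.card (PG F (GLV F V) V) = Nat.card (GLV F V) * (q ^ n * (q - 1)) := by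
    have e : PG F (GLV F V) V ≃ (GLV F V) × (V × Fˣ) :=
      { toFun := fun g => (g.A, g.X (), g.t ())
        invFun := fun y => ⟨y.1, fun _ => y.2.1, fun _ => y.2.2⟩
        left_inv := fun g => rfl
        right_inv := fun y => rfl }
    rw [Nat.card_congr e, Nat.card_prod, Nat.card_prod, hV, Nat.card_units]
  have h1 := Subgroup.card_mul_index (pToGL F V).range
  rw [← Nat.card_congr (MonoidHom.ofInjective (pToGL_inj F V)).toEquiv, hP,
    card_GLV (V × F) (n+1) hW, card_GLV V n rfl, Fin.prod_univ_succ] at h1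
  have h2 : ∏ i : Fin n, (q ^ (n+1) - q ^ ((i.succ : Fin (n+1)) : ℕ)) =
      q ^ n * ∏ i : Fin n, (q ^ n - q ^ (i : ℕ)) := by
    have : ∀ i : Fin n, (q ^ (n+1) - q ^ ((i.succ : Fin (n+1)) : ℕ)) = q * (q ^ n - q ^ (i : ℕ)) := by
      intro i
      rw [Fin.val_succ, pow_succ', pow_succ', Nat.mul_sub]
    simp only [this, Finset.prod_mul_distrib, Finset.prod_const, Finset.card_univ, Fintype.card_fin]
  rw [h2] at h1
  have hpos : 0 < q ^ n * ∏ i : Fin n, (q ^ n - q ^ (i : ℕ)) := by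
    apply Nat.mul_pos (pow_pos (by omega) _)
    apply Finset.prod_pos
    intro i _
    exact Nat.sub_pos_of_lt (Nat.pow_lt_pow_right hq1 i.2)
  have h3 : (q - 1) * (pToGL F V).range.index = q ^ (n+1) - 1 := by
    apply Nat.eq_of_mul_eq_mul_left hpos
    rw [Fin.val_zero, pow_zero] at h1
    calc _ = _ := by ring
      _ = _ := h1
      _ = _ := by ring
  intro h0
  have h4 := congrArg (Nat.cast : ℕ → k) h3
  rw [Nat.cast_mul, h0, mul_zero, Nat.cast_sub (Nat.one_le_pow _ _ (by omega)), Nat.cast_pow, hk] at h4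
  simp at h4

lemma card_units_ne {k : Type} [Field k] (hk : (Nat.card F : k) = 0) :
    (Nat.card Fˣ : k) ≠ 0 := by
  haveI := Fintype.ofFinite F
  rw [Nat.card_units, Nat.cast_sub Nat.card_pos, hk]
  simp

/-- property of classes to be pulled -/
def Cprop (k F V : Type) [Field k] [Field F] [AddCommGroup V] [Module F V] : Prop :=
  ∀ (D : ℕ) (x : H k (GLV F (V × F)) D),
    res (pToGL F V) x = res (QG.del (fun _ => True)) (res (pToGL F V) x) → x = 0

lemma Cprop_of_equiv {k V V₁ : Type} [Field k] [AddCommGroup V] [Module F V] [AddCommGroup V₁]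
    [Module F V₁] (e : V₁ ≃ₗ[F] V) (h : Cprop k F V₁) : Cprop k F V := by
  intro D x hx
  let E : (V₁ × F) ≃ₗ[F] (V × F) := e.prodCongr (LinearEquiv.refl F F)
  have h1 : res (conjE E) x = 0 := by
    apply h
    let m : PG F (GLV F V₁) V₁ →* PG F (GLV F V) V := QG.mapG (conjE e) e.toLinearMap (by
      intro g v
      simp [conjE_apply])
    have c1 : res (pToGL F V₁) (res (conjE E) x) = res m (res (pToGL F V) x) := by
      rw [res_res, res_res]
      apply res_eq_of_comp
      intro g
      ext w <;> simp [E, conjE_apply, pToGL_apply, m, QG.mapG, Units.smul_def]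
    rw [c1]
    conv_lhs => rw [hx]
    simp only [res_res]
    apply res_eq_of_comp
    intro g
    simp only [MonoidHom.comp_apply]
    congr 1
    apply QG.ext' <;> simp [m, QG.mapG]
  have h2 := congrArg (res (conjE E.symm)) h1
  rw [map_zero, res_res] at h2
  rw [← h2]
  conv_lhs => rw [← res_id x]
  apply res_eq_of_comp
  intro g
  ext w <;> simp [conjE_apply]

lemma Cprop_main {k : Type} [Field k] (hk : (Nat.card F : k) = 0) : ∀ (n : ℕ) (V : Type)
    [AddCommGroup V] [Module F V] [Finite V], Module.finrank F V = n → Cprop k F V := by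
  have step : ∀ (V : Type) [AddCommGroup V] [Module F V] [Finite V] (D : ℕ)
      (x : H k (GLV F (V × F)) D) (j : GLV F V →* GLV F (V × F)),
      (∀ g w, j g w = (g w.1, w.2)) → 
      res (pToGL F V) x = res (QG.del (fun _ => True)) (res (pToGL F V) x) →
      res j x = 0 → x = 0 := by
    intro V _ _ _ D x j hj hx h0
    refine transfer (pToGL F V) (pToGL_inj F V) (pToGL_index hk) x ?_
    rw [hx]
    let emb : GLV F V × Fˣ →* PG F (GLV F V) V := MonoidHom.mk' (fun g => ⟨g.1, 0, fun _ => g.2⟩) (by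
      intro g h
      apply QG.ext' <;> simp)
    let pr : PG F (GLV F V) V →* GLV F V × Fˣ := MonoidHom.mk' (fun g => (g.A, g.t ())) (by
      intro g h; simp)
    have h1 : res emb (res (pToGL F V) x) = 0 := by
      refine transfer_ker (MonoidHom.inl (GLV F V) Fˣ) ?_ (MonoidHom.snd (GLV F V) Fˣ)
        (card_units_ne hk) ?_ _ ?_
      · intro a b h; exact congrArg Prod.fst h
      · rintro ⟨g, t⟩ h; exact ⟨g, by ext <;> simp_all⟩
      · rw [res_res, res_res, ← h0]
        apply res_eq_of_comp
        intro g
        ext w <;> simp [hj, pToGL_apply, emb, Units.smul_def]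
    have h2 := congrArg (res pr) h1
    rw [map_zero, res_res] at h2
    rw [← h2]
    apply res_eq_of_comp
    intro g
    apply QG.ext' <;> simp [emb, pr]
  intro n
  have hj : ∀ (V : Type) [AddCommGroup V] [Module F V], ∃ j : GLV F V →* GLV F (V × F),
      (∀ g w, j g w = (g w.1, w.2)) := by
    intro V _ _
    refine ⟨MonoidHom.mk' (fun g => g.prodCongr (LinearEquiv.refl F F)) ?_, ?_⟩
    · intro g h; ext w <;> simp
    · intro g w; simp
  induction n with
  | zero =>
    intro V _ _ _ hV D x hx
    obtain ⟨j, hj⟩ := hj V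
    refine step V D x j hj hx ?_
    apply H_coprime
    haveI : Module.Finite F V := Module.Finite.of_finite
    haveI : Subsingleton V := Module.finrank_zero_iff.1 hV
    haveI : Subsingleton (GLV F V) := ⟨fun a b => LinearEquiv.ext fun v => Subsingleton.elim _ _⟩
    rw [Nat.card_of_subsingleton 1]; simp
  | succ n ih =>
    intro V _ _ _ hV
    haveI : Module.Finite F V := Module.Finite.of_finite
    let V2 := Fin n → F
    have e : (V2 × F) ≃ₗ[F] V := LinearEquiv.ofFinrankEq _ _ (by
      rw [Module.finrank_prod, hV]; simp [V2])
    apply Cprop_of_equiv e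
    have ih2 := ih V2 (by simp [V2])
    intro D x hx
    obtain ⟨j, hj⟩ := hj (V2 × F)
    refine step (V2 × F) D x j hj hx ?_
    apply ih2
    let m : PG F (GLV F V2) V2 →* PG F (GLV F (V2 × F)) (V2 × F) :=
      MonoidHom.mk' (fun g => ⟨g.A.prodCongr (LinearEquiv.refl F F), fun c => (g.X c, 0), g.t⟩) (by
        intro g h
        apply QG.ext'
        · ext w <;> simp
        · intro c; ext <;> simp
        · simp)
    let sw : GLV F ((V2 × F) × F) :=
      { toFun := fun w => ((w.1.1, w.2), w.1.2)
        invFun := fun w => ((w.1.1, w.2), w.1.2)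
        map_add' := fun _ _ => rfl
        map_smul' := fun _ _ => rfl
        left_inv := fun _ => rfl
        right_inv := fun _ => rfl }
    have c1 : res (pToGL F V2) (res j x) = res m (res (pToGL F (V2 × F)) x) := by
      rw [res_res, res_res]
      apply res_conj _ _ sw
      intro g
      ext w <;> simp [hj, pToGL_apply, m, sw, Units.smul_def]
    rw [c1]
    conv_lhs => rw [hx]
    simp only [res_res]
    apply res_eq_of_comp
    intro g
    simp only [MonoidHom.comp_apply]
    congr 1
    apply QG.ext'
    · simp [m]
    · intro c; simp [m]; rfl
    · simp [m]

end fin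
end Coh

namespace Coh

section delx
variable {k F Γ V κ τ : Type} [Field k] [Field F] {b : κ → τ} [Group Γ] [AddCommGroup V] [Module F V]
  [DistribMulAction Γ V] [SMulCommClass Γ F V]

lemma res_del_comm (U U' : κ → Prop) {n : ℕ} (x : H k (QG F Γ V κ τ b) n) :
    res (QG.del U) (res (QG.del U') x) = res (QG.del U') (res (QG.del U) x) := by
  rw [res_res, res_res]
  apply res_eq_of_comp
  intro g
  apply QG.ext'
  · rfl
  · intro c
    simp only [MonoidHom.comp_apply, QG.del_X]
    split_ifs <;> rfl
  · intro β; rfl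

lemma res_del_idem (U : κ → Prop) {n : ℕ} (x : H k (QG F Γ V κ τ b) n) :
    res (QG.del U) (res (QG.del U) x) = res (QG.del U) x := by
  rw [res_res]
  apply res_eq_of_comp
  intro g
  apply QG.ext'
  · rfl
  · intro c
    simp only [MonoidHom.comp_apply, QG.del_X]
    split_ifs <;> rfl
  · intro β; rfl

end delx

/-- the main inductive claim -/
def Main (k F : Type) [Field k] [Field F] (M j : ℕ) : Prop :=
  ∀ (V : Type) [AddCommGroup V] [Module F V] [Finite V], Module.finrank F V = j →
  ∀ (κ τ : Type) [Finite κ] [Finite τ] (b : κ → τ) (T : Finset τ), (∀ c, b c ∈ T) →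
  ∀ D : ℕ, D + 2 < j + T.card + M → ∀ x : H k (QG F (GLV F V) V κ τ b) D,
    (∀ β ∈ T, res (QG.del (fun c => b c = β)) x = 0) → x = 0

open Classical in
/-- merged block map -/
noncomputable def bE {κ τ : Type} (b : κ → τ) (E : Finset τ) : Option κ → Option τ
  | none => none
  | some c => if b c ∈ E then none else some (b c)

section K
variable {F V κ τ : Type} [Field F] [AddCommGroup V] [Module F V] (b : κ → τ)

/-- the group K -/
abbrev KG (F V : Type) {κ τ : Type} [Field F] [AddCommGroup V] [Module F V] (b : κ → τ) : Type :=
  QG F (PG F (GLV F V) V) (V × F) κ τ b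

/-- the source of theta -/
abbrev TG (F V : Type) {κ τ : Type} [Field F] [AddCommGroup V] [Module F V] (b : κ → τ)
    (E : Finset τ) : Type :=
  QG F (GLV F V) V (Option κ) (Option τ) (bE b E)

/-- the source of zeta -/
abbrev ZG (F V : Type) {κ τ : Type} [Field F] [AddCommGroup V] [Module F V] (b : κ → τ)
    (E : Finset τ) : Type :=
  QG F (GLV F V) V {c : κ // b c ∉ E} (Option τ) (fun c => some (b c.1))

/-- subgroups of K -/
def KS (F V : Type) {κ τ : Type} [Field F] [AddCommGroup V] [Module F V] (b : κ → τ)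
    (S E : Finset τ) : Subgroup (KG F V b) where
  carrier := {g | (∀ c, (b c ∈ S ∨ b c ∈ E) → (g.X c).2 = 0) ∧ ∀ β ∈ E, g.t β = g.A.t ()}
  mul_mem' := by
    rintro g h ⟨h1, h2⟩ ⟨h3, h4⟩
    refine ⟨fun c hc => ?_, fun β hβ => ?_⟩
    · simp [h1 c hc, h3 c hc]
    · simp [h2 β hβ, h4 β hβ]
  one_mem' := ⟨fun c hc => by simp, fun β hβ => by simp⟩
  inv_mem' := by
    rintro g ⟨h1, h2⟩
    refine ⟨fun c hc => ?_, fun β hβ => ?_⟩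
    · simp [h1 c hc]
    · simp [h2 β hβ]

lemma mem_KS {S E : Finset τ} {g : KG F V b} : g ∈ KS F V b S E ↔
  (∀ c, (b c ∈ S ∨ b c ∈ E) → (g.X c).2 = 0) ∧ ∀ β ∈ E, g.t β = g.A.t () := Iff.rfl

open Classical in
/-- theta -/
noncomputable def theta (S E : Finset τ) : TG F V b E →* KS F V b S E :=
  MonoidHom.mk' (fun g => ⟨⟨⟨g.A, fun _ => g.X none, fun _ => g.t none⟩,
      fun c => (g.X (some c), 0), fun β => if β ∈ E then g.t none else g.t (some β)⟩, by
        refine ⟨fun c hc => rfl, fun β hβ => ?_⟩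
        simp [hβ]⟩) (by
    intro g h
    apply Subtype.ext
    apply QG.ext'
    · apply QG.ext'
      · simp
      · intro c; simp [bE]
      · simp
    · intro c
      ext
      · simp only [Subgroup.coe_mul, QG.mul_X, bE, PG_smul_fst, Prod.fst_add]
        split_ifs <;> simp
      · simp only [Subgroup.coe_mul, QG.mul_X, PG_smul_snd, Prod.snd_add]
        split_ifs <;> simp
    · intro β
      simp only [Subgroup.coe_mul, QG.mul_t, Pi.mul_apply]
      split_ifs <;> simp)

open Classical in
/-- zeta -/
noncomputable def zeta (S E : Finset τ) : ZG F V b E →* KS F V b S E :=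
  MonoidHom.mk' (fun g => ⟨⟨⟨g.A, fun _ => 0, fun _ => g.t none⟩,
      fun c => if h : b c ∈ E then 0 else (g.X ⟨c, h⟩, 0),
      fun β => if β ∈ E then g.t none else g.t (some β)⟩, by
        refine ⟨fun c hc => ?_, fun β hβ => ?_⟩
        · dsimp only; split_ifs <;> rfl
        · simp [hβ]⟩) (by
    intro g h
    apply Subtype.ext
    apply QG.ext'
    · apply QG.ext'
      · simp
      · intro c; simp
      · simp
    · intro c
      ext
      · simp only [Subgroup.coe_mul, QG.mul_X, PG_smul_fst, Prod.fst_add]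
        split_ifs <;> simp
      · simp only [Subgroup.coe_mul, QG.mul_X, PG_smul_snd, Prod.snd_add]
        split_ifs <;> simp
    · intro β
      simp only [Subgroup.coe_mul, QG.mul_t, Pi.mul_apply]
      split_ifs <;> simp)

/-- deletions on KS -/
noncomputable def delS (S E : Finset τ) (β : τ) : KS F V b S E →* KS F V b S E :=
  MonoidHom.mk' (fun g => ⟨QG.del (fun c => b c = β) g.1, by
      refine ⟨fun c hc => ?_, fun β hβ => ?_⟩
      · have := g.2.1 c hc
        simp only [QG.del_X]; split_ifs <;> simp [this]
      · simpa using g.2.2 β hβ⟩) (by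
    intro g h
    apply Subtype.ext
    simp)

/-- killing the V direction -/
noncomputable def dV (S E : Finset τ) : KS F V b S E →* KS F V b S E :=
  MonoidHom.mk' (fun g => ⟨⟨⟨1, fun _ => 0, g.1.A.t⟩, fun c => (0, (g.1.X c).2), g.1.t⟩, by
      refine ⟨fun c hc => g.2.1 c hc, fun β hβ => g.2.2 β hβ⟩⟩) (by
    intro g h
    apply Subtype.ext
    apply QG.ext'
    · apply QG.ext'
      · simp
      · intro c; simp
      · simp
    · intro c; ext <;> simp
    · intro β; simp)

end K

section PS
variable {k F V κ τ : Type} [Field k] [Field F] [Finite F] [AddCommGroup V] [Module F V] [Finite V]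
  [Finite κ] [Finite τ] (b : κ → τ)

open Classical in
lemma Zlem {M j : ℕ} (hM : Main k F M j) (hV : Module.finrank F V = j) (T : Finset τ)
    (hT : ∀ c, b c ∈ T) (E : Finset τ) {D : ℕ} (hD : D + 2 < j + 1 + (T \ E).card + M)
    (z : H k (TG F V b E) D)
    (hz : ∀ β ∈ T \ E, res (QG.del (fun c => bE b E c = some β)) z = 0) :
    z = res (QG.del (fun c => bE b E c = none)) z := by
  rw [← sub_eq_zero]
  refine hM V hV (Option κ) (Option τ) (bE b E) (Finset.insertNone (T \ E)) ?_ D ?_ _ ?_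
  · rintro (_ | c)
    · simp [bE]
    · simp only [bE]
      split_ifs with h
      · simp
      · simp [h, hT]
  · rw [Finset.card_insertNone]; omega
  · rintro (_ | β) hβ
    · rw [map_sub, res_del_idem, sub_self]
    · have h1 := hz β (by simpa using hβ)
      rw [map_sub, res_del_comm, h1, map_zero, sub_zero]

end PS
end Coh

namespace Coh

section simps
variable {F V κ τ : Type} [Field F] [AddCommGroup V] [Module F V] (b : κ → τ) (S E : Finset τ)

open Classical in
lemma theta_val (g : TG F V b E) : (theta b S E g : KG F V b) =
    ⟨⟨g.A, fun _ => g.X none, fun _ => g.t none⟩,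
      fun c => (g.X (some c), 0), fun β => if β ∈ E then g.t none else g.t (some β)⟩ := rfl

open Classical in
lemma zeta_val (g : ZG F V b E) : (zeta b S E g : KG F V b) =
    ⟨⟨g.A, fun _ => 0, fun _ => g.t none⟩,
      fun c => if h : b c ∈ E then 0 else (g.X ⟨c, h⟩, 0),
      fun β => if β ∈ E then g.t none else g.t (some β)⟩ := rfl

lemma delS_val (β : τ) (g : KS F V b S E) :
    (delS b S E β g : KG F V b) = QG.del (fun c => b c = β) g.1 := rfl

lemma dV_val (g : KS F V b S E) : (dV b S E g : KG F V b) =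
    ⟨⟨1, fun _ => 0, g.1.A.t⟩, fun c => (0, (g.1.X c).2), g.1.t⟩ := rfl

lemma KS_le {S E S' E' : Finset τ} (h1 : S' ⊆ S) (h2 : E' ⊆ E) : KS F V b S E ≤ KS F V b S' E' := by
  rintro g ⟨h3, h4⟩
  exact ⟨fun c hc => h3 c (hc.imp (fun h => h1 h) (fun h => h2 h)), fun β hβ => h4 β (h2 hβ)⟩

open Classical in
lemma theta_delS (β : τ) (hβ : β ∉ E) (g : TG F V b E) :
    theta b S E (QG.del (fun c => bE b E c = some β) g) = delS b S E β (theta b S E g) := by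
  apply Subtype.ext
  rw [theta_val, delS_val, theta_val]
  apply QG.ext'
  · simp [bE]
  · intro c
    simp only [QG.del_X, bE]
    by_cases h : b c = β
    · subst h; simp [hβ]
    · by_cases h2 : b c ∈ E
      · simp [h, h2]
      · simp [h, h2]
  · intro β; simp

open Classical in
lemma zeta_delS (β : τ) (g : ZG F V b E) :
    zeta b S E (QG.del (fun c => some (b c.1) = some β) g) = delS b S E β (zeta b S E g) := by
  apply Subtype.ext
  rw [zeta_val, delS_val, zeta_val]
  apply QG.ext'
  · simp
  · intro c
    simp only [QG.del_X]
    by_cases h : b c = β <;> by_cases h2 : b c ∈ E <;> simp [h, h2]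
  · intro β; simp

end simps

section PS
variable {k F V κ τ : Type} [Field k] [Field F] [Finite F] [AddCommGroup V] [Module F V] [Finite V]
  [Finite κ] [Finite τ] (b : κ → τ)

open Classical in
/-- the property PS -/
def PS (k F V : Type) {κ τ : Type} [Field k] [Field F] [AddCommGroup V] [Module F V] (b : κ → τ)
    (M j : ℕ) (T S E : Finset τ) : Prop :=
  ∀ D, D + 2 < j + 1 + (T \ E).card + M → ∀ x : H k (KS F V b S E) D,
    (∀ β ∈ T \ E, res (delS b S E β) x = 0) → res (dV b S E) x = 0 → res (zeta b S E) x = 0 → x = 0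

open Classical in
lemma PS_base {M j : ℕ} (hM : Main k F M j) (hV : Module.finrank F V = j) (T : Finset τ)
    (hT : ∀ c, b c ∈ T) (S E : Finset τ) (hTS : ∀ β ∈ T, β ∈ S ∨ β ∈ E) :
    PS k F V b M j T S E := by
  intro D hD x h1 h2 h3
  let s : KS F V b S E →* TG F V b E := MonoidHom.mk' (fun g => ⟨g.1.A.A,
      fun c => match c with
        | none => g.1.A.X ()
        | some c => (g.1.X c).1,
      fun β => match β with
        | none => g.1.A.t ()
        | some β => g.1.t β⟩) (by
    intro g h
    apply QG.ext'
    · simp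
    · rintro (_ | c)
      · simp [bE]
      · have e1 := h.2.1 c (hTS _ (hT c))
        simp only [Subgroup.coe_mul, QG.mul_X, PG_smul_fst, Prod.fst_add, e1, zero_smul, add_zero, bE]
        split_ifs with hc
        · simp [h.2.2 _ hc]
        · simp
    · rintro (_ | β) <;> simp)
  have hs : ∀ g, theta b S E (s g) = g := by
    intro g
    apply Subtype.ext
    rw [theta_val]
    apply QG.ext'
    · apply QG.ext' <;> simp [s]
    · intro c
      ext
      · simp [s]
      · simp [g.2.1 c (hTS _ (hT c))]
    · intro β
      simp only [s, MonoidHom.mk'_apply]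
      split_ifs with h
      · exact (g.2.2 β h).symm
      · rfl
  have hz := Zlem b hM hV T hT E hD (res (theta b S E) x) (by
    intro β hβ
    have : res (QG.del (fun c => bE b E c = some β)) (res (theta b S E) x) =
        res (theta b S E) (res (delS b S E β) x) := by
      rw [res_res, res_res]
      apply res_eq_of_comp
      intro g
      exact theta_delS b S E β (Finset.mem_sdiff.1 hβ).2 g
    rw [this, h1 β hβ, map_zero])
  let rr : TG F V b E →* ZG F V b E := MonoidHom.mk' (fun g => ⟨g.A, fun c => g.X (some c.1), g.t⟩) (by
    intro g h
    apply QG.ext'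
    · simp
    · intro c; simp [bE, c.2]
    · simp)
  have h4 : res (QG.del (fun c => bE b E c = none)) (res (theta b S E) x) = 0 := by
    have : res (QG.del (fun c => bE b E c = none)) (res (theta b S E) x) =
        res rr (res (zeta b S E) x) := by
      rw [res_res, res_res]
      apply res_eq_of_comp
      intro g
      apply Subtype.ext
      simp only [MonoidHom.comp_apply]
      rw [theta_val, zeta_val]
      apply QG.ext'
      · simp [rr, bE]
      · intro c
        by_cases hc : b c ∈ E <;> simp [bE, rr, hc]
      · intro β; simp [rr]
    rw [this, h3, map_zero]
  rw [h4] at hz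
  have h5 := congrArg (res s) hz
  rw [map_zero, res_res] at h5
  rw [← h5]
  conv_lhs => rw [← res_id x]
  apply res_eq_of_comp
  intro g
  exact (hs g).symm

end PS


end Coh

namespace Coh

section triv
variable {F : Type} [Field F]

instance trivAct : DistribMulAction Unit F where
  smul _ x := x
  one_smul _ := rfl
  mul_smul _ _ _ := rfl
  smul_zero _ := rfl
  smul_add _ _ _ := rfl

lemma triv_smul (u : Unit) (x : F) : u • x = x := rfl

instance : SMulCommClass Unit F F := ⟨fun _ _ _ => rfl⟩

/-- affine type group -/
abbrev AG (F κ : Type) [Field F] : Type := QG F Unit F κ Unit (fun _ => ())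

lemma AG_char {k κ A : Type} [Field k] [Finite F] [AddCommGroup A] [Module k A]
    (hk : (Nat.card F : k) = 0) (lam : Fˣ) (hlam : lam ≠ 1)
    (ψ : AG F κ → A) (hψ : ∀ g h, ψ (g * h) = ψ g + ψ h) (g : AG F κ) : ψ g = 0 := by
  have h1 : ψ 1 = 0 := by
    have := hψ 1 1
    rw [mul_one] at this
    exact left_eq_add.1 this
  have hs : ∀ s : Fˣ, ψ ⟨(), 0, fun _ => s⟩ = 0 := by
    intro s
    have hpow : ∀ n : ℕ, ψ ⟨(), 0, fun _ => s ^ n⟩ = n • ψ ⟨(), 0, fun _ => s⟩ := by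
      intro n
      induction n with
      | zero =>
        rw [zero_smul, ← h1]; congr 1
        apply QG.ext' <;> simp
      | succ n ih =>
        rw [succ_nsmul, ← ih, ← hψ]
        congr 1
        apply QG.ext' <;> simp [pow_succ]
    have := hpow (Nat.card Fˣ)
    rw [pow_card_eq_one'] at this
    have e : ψ ⟨(), 0, fun _ => 1⟩ = 0 := by
      rw [← h1]; congr 1
    rw [e, ← Nat.cast_smul_eq_nsmul k] at this
    exact (smul_eq_zero.1 this.symm).resolve_left (card_units_ne hk)
  have hy : ∀ y : κ → F, ψ ⟨(), y, 1⟩ = 0 := by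
    intro y
    have hl : (lam : F) - 1 ≠ 0 := by
      intro h; apply hlam; ext; simpa [sub_eq_zero] using h
    set w : κ → F := fun c => ((lam : F) - 1)⁻¹ * y c with hw
    have e1 : ψ (⟨(), w, 1⟩ * ⟨(), 0, fun _ => lam⟩) =
        ψ (⟨(), 0, fun _ => lam⟩ * ((⟨(), w, 1⟩ : AG F κ) * ⟨(), y, 1⟩)) := by
      congr 1
      apply QG.ext'
      · simp
      · intro c
        simp only [QG.mul_X, triv_smul, Units.smul_def, smul_eq_mul, hw]
        simp
        field_simp
        ring
      · simp
    rw [hψ, hψ, hψ, hs, add_zero, zero_add] at e1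
    exact left_eq_add.1 e1
  have : g = ⟨(), 0, g.t⟩ * ⟨(), g.X, 1⟩ := by
    apply QG.ext' <;> simp [triv_smul]
  rw [this, hψ, hy, add_zero]
  exact hs (g.t ())

end triv

section PS
variable {k F V κ τ : Type} [Field k] [Field F] [Finite F] [AddCommGroup V] [Module F V] [Finite V]
  [Finite κ] [Finite τ] (b : κ → τ)

/-- projection to the affine group -/
noncomputable def piA (S E : Finset τ) (β1 : τ) : KS F V b S E →* AG F {c : κ // b c = β1} :=
  MonoidHom.mk' (fun g => ⟨(), fun c => (g.1.A.t ())⁻¹ • (g.1.X c).2, fun _ => g.1.t β1 * (g.1.A.t ())⁻¹⟩) (by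
    intro g h
    apply QG.ext'
    · simp
    · rintro ⟨c, rfl⟩
      simp only [Subgroup.coe_mul, QG.mul_X, PG_smul_snd, Prod.snd_add, QG.mul_A, QG.mul_t, Pi.mul_apply,
        triv_smul, Units.smul_def, smul_eq_mul, Prod.smul_snd]
      simp
      field_simp
    · intro β
      simp only [Subgroup.coe_mul, QG.mul_A, QG.mul_t, Pi.mul_apply]
      rw [mul_inv, mul_mul_mul_comm])

open Classical in
/-- section -/
noncomputable def secA (S E : Finset τ) (β1 : τ) (hS : β1 ∉ S) (hE : β1 ∉ E) :
    AG F {c : κ // b c = β1} →* KS F V b S E :=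
  MonoidHom.mk' (fun g => ⟨⟨⟨1, fun _ => 0, fun _ => 1⟩,
      fun c => if h : b c = β1 then (0, g.X ⟨c, h⟩) else 0,
      fun β => if β = β1 then g.t () else 1⟩, by
      refine ⟨fun c hc => ?_, fun β hβ => ?_⟩
      · have : b c ≠ β1 := by rintro rfl; tauto
        simp [this]
      · have : β ≠ β1 := by rintro rfl; tauto
        simp [this]⟩) (by
    intro g h
    apply Subtype.ext
    apply QG.ext'
    · apply QG.ext' <;> simp
    · intro c
      simp only [Subgroup.coe_mul, QG.mul_X]
      ext
      · split_ifs <;> simp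
      · split_ifs <;> simp [triv_smul]
    · intro β
      simp only [Subgroup.coe_mul, QG.mul_t, Pi.mul_apply]
      split_ifs <;> simp)

lemma piA_secA (S E : Finset τ) (β1 : τ) (hS : β1 ∉ S) (hE : β1 ∉ E)
    (g : AG F {c : κ // b c = β1}) : piA (V := V) b S E β1 (secA b S E β1 hS hE g) = g := by
  apply QG.ext'
  · rfl
  · rintro ⟨c, rfl⟩
    simp [piA, secA]
  · intro β; simp [piA, secA]

lemma delS_idem (S E : Finset τ) (β : τ) (g : KS F V b S E) :
    delS b S E β (delS b S E β g) = delS b S E β g := by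
  apply Subtype.ext
  simp only [delS_val]
  apply QG.ext'
  · simp
  · intro c; simp only [QG.del_X]; split_ifs <;> rfl
  · simp

lemma delS_comm (S E : Finset τ) (β β' : τ) (g : KS F V b S E) :
    delS b S E β (delS b S E β' g) = delS b S E β' (delS b S E β g) := by
  apply Subtype.ext
  simp only [delS_val]
  apply QG.ext'
  · simp
  · intro c; simp only [QG.del_X]; split_ifs <;> rfl
  · simp

lemma delS_dV (S E : Finset τ) (β : τ) (g : KS F V b S E) :
    delS b S E β (dV b S E g) = dV b S E (delS b S E β g) := by
  apply Subtype.ext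
  simp only [delS_val, dV_val]
  apply QG.ext'
  · simp
  · intro c; simp only [QG.del_X]; split_ifs <;> rfl
  · simp

lemma dV_idem (S E : Finset τ) (g : KS F V b S E) :
    dV b S E (dV b S E g) = dV b S E g := rfl

/-- operators -/
noncomputable def opS (S E : Finset τ) (R : Finset τ) : Option {β // β ∈ R} → KS F V b S E →* KS F V b S E
  | none => dV b S E
  | some β => delS b S E β.1

lemma opS_idem (S E R : Finset τ) (i) (g : KS F V b S E) :
    opS b S E R i (opS b S E R i g) = opS b S E R i g := by
  rcases i with _ | i
  · rfl
  · exact delS_idem b S E _ g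

lemma opS_comm (S E R : Finset τ) (i j) (g : KS F V b S E) :
    opS b S E R i (opS b S E R j g) = opS b S E R j (opS b S E R i g) := by
  rcases i with _ | i <;> rcases j with _ | j
  · rfl
  · exact (delS_dV b S E _ g).symm
  · exact (delS_dV b S E _ g)
  · exact delS_comm b S E _ _ g

open Classical in
/-- the extension -/
noncomputable def LDS (S E : Finset τ) (R : Finset τ) (β1 : τ) (hS : β1 ∉ S) (hE : β1 ∉ E)
    (hR : β1 ∉ R) :
    LD (KS F V b S E) (KS F V b S (insert β1 E)) (AG F {c : κ // b c = β1}) (Option {β // β ∈ R}) where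
  ι := Subgroup.inclusion (KS_le b (Finset.Subset.refl S) (Finset.subset_insert β1 E))
  inj := Subgroup.inclusion_injective _
  π := piA b S E β1
  surj := fun g => ⟨_, piA_secA b S E β1 hS hE g⟩
  ker := by
    intro g hg
    refine ⟨⟨g.1, ?_, ?_⟩, rfl⟩
    · intro c hc
      by_cases h : b c = β1
      · have := congrFun (congrArg QG.X hg) ⟨c, h⟩
        simpa [piA, Units.smul_def] using this
      · apply g.2.1 c
        simpa [h] using hc
    · intro β hβ
      by_cases h : β = β1
      · subst h
        have := congrFun (congrArg QG.t hg) ()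
        simp [piA] at this
        exact mul_inv_eq_one.1 this
      · apply g.2.2
        simpa [h] using hβ
  kerι := by
    intro n
    apply QG.ext'
    · rfl
    · rintro ⟨c, hc⟩
      have := n.2.1 c (Or.inr (by simp [hc]))
      simp [piA, this]
    · intro β
      have := n.2.2 β1 (by simp)
      simp [piA, this]
  φG := opS b S E R
  φN := opS b S (insert β1 E) R
  comp := by
    rintro (_ | i) n
    · rfl
    · rfl
  πφ := by
    rintro (_ | i) g
    · rfl
    · apply QG.ext'
      · rfl
      · rintro ⟨c, rfl⟩
        have : b c ≠ i.1 := by rintro h; exact hR (h ▸ i.2)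
        simp [piA, opS, delS_val, this]
      · intro β; rfl
  idem := opS_idem b _ _ R
  comm := opS_comm b _ _ R
  i0 := none
  l := Finset.univ.toList
  hl := by intro i; simp

open Classical in
lemma PS_step {M j : ℕ} (hk : (Nat.card F : k) = 0) (lam : Fˣ) (hlam : lam ≠ 1)
    (hM : Main k F M j) (hV : Module.finrank F V = j) (T : Finset τ)
    (hT : ∀ c, b c ∈ T) (S E : Finset τ) (β1 : τ) (hT1 : β1 ∈ T) (hS : β1 ∉ S) (hE : β1 ∉ E)
    (ih1 : PS k F V b M j T (insert β1 S) E) (ih2 : PS k F V b M j T S (insert β1 E)) :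
    PS k F V b M j T S E := by
  intro D hD x h1 h2 h3
  rcases Nat.eq_zero_or_pos D with h0 | h0
  · subst h0; exact H_zero x
  have hcard : (T \ insert β1 E).card + 1 = (T \ E).card := by
    have : T \ insert β1 E = (T \ E).erase β1 := by
      ext β; simp; tauto
    rw [this]
    apply Finset.card_erase_add_one
    simp [hT1, hE]
  let L := LDS (F := F) (V := V) b S E (T \ insert β1 E) β1 hS hE (by simp)
  have hZZ : ∀ (a : ℕ) (f : H k (KS F V b S (insert β1 E)) a), a + 2 < j + 1 + (T \ insert β1 E).card + M →
      (∀ i, res (L.φN i) f = 0) → res (zeta b S (insert β1 E)) f = 0 → f = 0 := by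
    intro a f ha hf hz
    refine ih2 a ha f ?_ (hf none) hz
    intro β hβ
    exact hf (some ⟨β, hβ⟩)
  refine LD.LHS2 (D := L) x ?_ ?_ ?_ (zeta b S (insert β1 E)) ?_ ?_ ?_
  · rintro (_ | i)
    · exact h2
    · apply h1
      have := Finset.mem_sdiff.1 i.2
      rw [Finset.mem_insert] at this
      exact Finset.mem_sdiff.2 ⟨this.1, by tauto⟩
  · let i1 : KS F V b (insert β1 S) E →* KS F V b S E :=
      Subgroup.inclusion (KS_le b (Finset.subset_insert β1 S) (Finset.Subset.refl E))
    let i2 : KS F V b S (insert β1 E) →* KS F V b (insert β1 S) E := Subgroup.inclusion (by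
      rintro g ⟨h3, h4⟩
      refine ⟨fun c hc => h3 c ?_, fun β hβ => h4 β (by simp [hβ])⟩
      simp at hc ⊢; tauto)
    have e : res i1 x = 0 := by
      refine ih1 D hD _ ?_ ?_ ?_
      · intro β hβ
        have := congrArg (res i1) (h1 β hβ)
        rw [map_zero, res_res] at this
        rw [res_res, ← this]
        apply res_eq_of_comp; intro g; rfl
      · have := congrArg (res i1) h2
        rw [map_zero, res_res] at this
        rw [res_res, ← this]
        apply res_eq_of_comp; intro g; rfl
      · rw [res_res, ← h3]
        apply res_eq_of_comp; intro g; rfl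
    have e2 := congrArg (res i2) e
    rw [map_zero, res_res] at e2
    rw [← e2]
    apply res_eq_of_comp; intro g; rfl
  · intro a ha f hf
    refine hZZ a f (by omega) hf ?_
    refine hM V hV _ _ _ ((T \ insert β1 E).map Function.Embedding.some) ?_ a ?_ _ ?_
    · rintro ⟨c, hc⟩
      simp only [Finset.mem_map, Finset.mem_sdiff]
      exact ⟨b c, ⟨hT c, hc⟩, rfl⟩
    · rw [Finset.card_map]; omega
    · intro β hβ
      simp only [Finset.mem_map] at hβ
      obtain ⟨β, hβ, rfl⟩ := hβ
      have := congrArg (res (zeta b S (insert β1 E))) (hf (some ⟨β, hβ⟩))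
      rw [map_zero, res_res] at this
      rw [res_res, ← this]
      apply res_eq_of_comp
      intro g
      exact zeta_delS b S (insert β1 E) β g
  · intro f hf hz
    exact hZZ (D-1) f (by omega) hf hz
  · intro q
    refine ⟨secA b S E β1 hS hE q, piA_secA b S E β1 hS hE q, ?_⟩
    intro z
    apply Subtype.ext
    have e1 : ((L.ι (zeta b S (insert β1 E) z) : KS F V b S E) : KG F V b) =
      (zeta b S (insert β1 E) z : KG F V b) := rfl
    rw [Subgroup.coe_mul, Subgroup.coe_mul, e1, zeta_val]
    apply QG.ext'
    · apply QG.ext' <;> simp [secA]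
    · intro c
      by_cases h : b c = β1
      · ext <;> simp [secA, h, Units.smul_def]
      · by_cases h2 : b c ∈ E
        · ext <;> simp [secA, h, h2]
        · ext <;> simp [secA, h, h2]
    · intro β
      simp [secA, mul_comm]
  · intro χ hχ hχN g
    have h1 : χ 1 = 0 := by
      have := hχ 1 1
      rw [mul_one] at this
      exact left_eq_add.1 this
    have e1 : χ (secA b S E β1 hS hE (L.π g)) = 0 :=
      AG_char hk lam hlam (fun q => χ (secA b S E β1 hS hE q)) (by
        intro q q'; simp only [map_mul, hχ]) _
    obtain ⟨n, hn⟩ := L.ker (g * (secA b S E β1 hS hE (L.π g))⁻¹) (by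
      rw [map_mul, map_inv]
      have : L.π (secA b S E β1 hS hE (L.π g)) = L.π g := piA_secA b S E β1 hS hE _
      rw [this, mul_inv_cancel])
    have e2 : g = L.ι n * secA b S E β1 hS hE (L.π g) := by rw [hn]; group
    rw [e2, hχ, hχN, e1, add_zero]

open Classical in
theorem PS_all {M j : ℕ} (hk : (Nat.card F : k) = 0) (lam : Fˣ) (hlam : lam ≠ 1)
    (hM : Main k F M j) (hV : Module.finrank F V = j) (T : Finset τ)
    (hT : ∀ c, b c ∈ T) : ∀ (m : ℕ) (S E : Finset τ), (T \ (S ∪ E)).card = m →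
    PS k F V b M j T S E := by
  intro m
  induction m with
  | zero =>
    intro S E h
    apply PS_base b hM hV T hT S E
    intro β hβ
    rw [Finset.card_eq_zero, Finset.sdiff_eq_empty_iff_subset] at h
    simpa using h hβ
  | succ m ih =>
    intro S E h
    obtain ⟨β1, h1⟩ : (T \ (S ∪ E)).Nonempty := by rw [← Finset.card_pos]; omega
    have hc : ((T \ (S ∪ E)).erase β1).card = m := by
      rw [Finset.card_erase_of_mem h1]; omega
    have h2 := h1
    simp only [Finset.mem_sdiff, Finset.mem_union, not_or] at h2
    apply PS_step b hk lam hlam hM hV T hT S E β1 h2.1 h2.2.1 h2.2.2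
    · apply ih; rw [← hc]; congr 1; ext β; simp; tauto
    · apply ih; rw [← hc]; congr 1; ext β; simp; tauto

end PS
end Coh

namespace Coh

section step
variable {k F V κ τ : Type} [Field k] [Field F] [Finite F] [AddCommGroup V] [Module F V] [Finite V]
  [Finite κ] [Finite τ] (b : κ → τ)

/-- inclusion of K -/
noncomputable def nuK (F V : Type) {κ τ : Type} [Field F] [AddCommGroup V] [Module F V] (b : κ → τ) :
    KG F V b →* QG F (GLV F (V × F)) (V × F) κ τ b :=
  QG.mapG (pToGL F V) LinearMap.id (fun _ _ => rfl)

lemma nuK_A (g : KG F V b) : (nuK F V b g).A = pToGL F V g.A := rfl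
lemma nuK_X (g : KG F V b) (c : κ) : (nuK F V b g).X c = g.X c := rfl
lemma nuK_t (g : KG F V b) (c : τ) : (nuK F V b g).t c = g.t c := rfl

lemma nuK_transfer (hk : (Nat.card F : k) = 0) {D : ℕ}
    (x : H k (QG F (GLV F (V × F)) (V × F) κ τ b) D) (h : res (nuK F V b) x = 0) : x = 0 := by
  refine transfer (nuK F V b) ?_ ?_ x h
  · intro g g' e
    apply QG.ext'
    · apply pToGL_inj
      rw [← nuK_A, ← nuK_A, e]
    · intro c; rw [← nuK_X, ← nuK_X, e]
    · intro c; rw [← nuK_t, ← nuK_t, e]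
  · let pr : QG F (GLV F (V × F)) (V × F) κ τ b →* GLV F (V × F) :=
      MonoidHom.mk' (fun g => g.A) (fun _ _ => rfl)
    have hpr : Function.Surjective pr := fun A => ⟨⟨A, 0, 1⟩, rfl⟩
    have e : (nuK F V b).range = (pToGL F V).range.comap pr := by
      ext g
      constructor
      · rintro ⟨g, rfl⟩; exact ⟨g.A, rfl⟩
      · rintro ⟨p, hp⟩
        refine ⟨⟨p, g.X, g.t⟩, ?_⟩
        apply QG.ext'
        · exact hp
        · intro c; rfl
        · intro c; rfl
    rw [e, Subgroup.index_comap_of_surjective _ hpr]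
    exact pToGL_index hk

/-- auxiliary map -/
noncomputable def tau0 (F V : Type) {κ τ : Type} [Field F] [AddCommGroup V] [Module F V] (b : κ → τ)
    (β0 : τ) : QG F (GLV F V) V κ τ b →* KG F V b :=
  MonoidHom.mk' (fun g => ⟨⟨g.A, fun _ => 0, fun _ => g.t β0⟩, fun c => (g.X c, 0), g.t⟩) (by
    intro g h
    apply QG.ext'
    · apply QG.ext' <;> simp
    · intro c; ext <;> simp
    · simp)

open Classical in
lemma stepii {M j : ℕ} (hM : Main k F M j) (hV : Module.finrank F V = j) (T : Finset τ)
    (hT : ∀ c, b c ∈ T) {D : ℕ} (hD : D + 2 < j + 1 + T.card + M)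
    (x : H k (KG F V b) D) (hx : ∀ β ∈ T, res (QG.del (fun c => b c = β)) x = 0) (c0 : κ) :
    res (tau0 F V b (b c0)) x = res (QG.del (fun c => c = c0)) (res (tau0 F V b (b c0)) x) := by
  let sub := (KS F V b ∅ ∅).subtype
  let σ : QG F (GLV F V) V κ τ b →* TG F V b ∅ := MonoidHom.mk' (fun g => ⟨g.A,
      fun c => match c with
        | none => g.X c0
        | some c => g.X c,
      fun β => match β with
        | none => g.t (b c0)
        | some β => g.t β⟩) (by
    intro g h
    apply QG.ext'
    · simp
    · rintro (_ | c) <;> simp [bE]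
    · rintro (_ | c) <;> simp)
  have hz := Zlem b hM hV T hT ∅ (by simpa using hD) (res (theta b ∅ ∅) (res sub x)) (by
    intro β hβ
    have : res (QG.del (fun c => bE b ∅ c = some β)) (res (theta b ∅ ∅) (res sub x)) =
        res (theta b ∅ ∅) (res sub (res (QG.del (fun c => b c = β)) x)) := by
      simp only [res_res]
      apply res_eq_of_comp
      intro g
      exact congrArg Subtype.val (theta_delS b ∅ ∅ β (by simp) g)
    rw [this, hx β (by simpa using hβ), map_zero, map_zero])
  set z := res (theta b ∅ ∅) (res sub x) with hzdef
  have e1 : res σ z = res (tau0 F V b (b c0)) x := by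
    rw [hz, hzdef]
    simp only [res_res]
    apply res_eq_of_comp
    intro g
    simp only [MonoidHom.comp_apply, sub, Subgroup.subtype_apply, theta_val]
    apply QG.ext'
    · apply QG.ext' <;> simp [σ, tau0, bE]
    · intro c; simp [σ, tau0, bE]
    · intro c; simp [σ, tau0, bE]
  have e2 : res σ (res (QG.del (fun c => c = some c0)) z) =
      res (QG.del (fun c => c = c0)) (res (tau0 F V b (b c0)) x) := by
    rw [hz, hzdef]
    simp only [res_res]
    apply res_eq_of_comp
    intro g
    simp only [MonoidHom.comp_apply, sub, Subgroup.subtype_apply, theta_val]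
    apply QG.ext'
    · apply QG.ext' <;> simp [σ, tau0, bE]
    · intro c; simp [σ, tau0, bE]
    · intro c; simp [σ, tau0, bE]
  rw [← e2, ← e1, hzdef]
  simp only [res_res]
  apply res_conj _ _ (⟨1, fun c => if c = c0 then (0, 1) else 0, 1⟩ : KG F V b)
  intro g
  simp only [MonoidHom.comp_apply, sub, Subgroup.subtype_apply, theta_val]
  apply QG.ext'
  · apply QG.ext' <;> simp [σ]
  · intro c
    by_cases h : c = c0
    · subst h; ext <;> simp [σ, Units.smul_def]
    · ext <;> simp [σ, h]
  · intro c; simp [σ]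

open Classical in
lemma stepii2 {M j : ℕ} (hk : (Nat.card F : k) = 0)
    (hM : Main k F M j) (hV : Module.finrank F V = j) (T : Finset τ)
    (hT : ∀ c, b c ∈ T) {D : ℕ} (hD : D + 2 < j + 1 + T.card + M)
    (x : H k (KG F V b) D) (hx : ∀ β ∈ T, res (QG.del (fun c => b c = β)) x = 0) (β0 : τ)
    (hβ0 : β0 ∈ T) : res (zeta b ∅ ∅) (res (KS F V b ∅ ∅).subtype x) = 0 := by
  haveI := Fintype.ofFinite κ
  have hB : ∀ B : Finset κ, (∀ c ∈ B, b c = β0) →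
      res (tau0 F V b β0) x = res (QG.del (fun c => c ∈ B)) (res (tau0 F V b β0) x) := by
    intro B
    induction B using Finset.induction_on with
    | empty =>
      intro _
      conv_lhs => rw [← res_id (res (tau0 F V b β0) x)]
      apply res_eq_of_comp
      intro g
      apply QG.ext' <;> simp
    | insert a B ha ih =>
      intro h
      have h1 := ih (fun c hc => h c (by simp [hc]))
      have h2 := stepii b hM hV T hT hD x hx a
      rw [h a (by simp)] at h2
      rw [h2] at h1
      conv_lhs => rw [h2, h1]
      simp only [res_res]
      apply res_eq_of_comp
      intro g
      simp only [MonoidHom.comp_apply]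
      congr 1
      apply QG.ext'
      · simp
      · intro c
        simp only [QG.del_X, Finset.mem_insert]
        by_cases h1 : c = a <;> by_cases h2 : c ∈ B <;> simp [h1, h2]
      · simp
  have hY : res (tau0 F V b β0) x = 0 := by
    rw [hB (Finset.univ.filter (fun c => b c = β0)) (by simp)]
    have := congrArg (res (tau0 F V b β0)) (hx β0 hβ0)
    rw [map_zero] at this
    rw [← this]
    simp only [res_res]
    apply res_eq_of_comp
    intro g
    apply QG.ext'
    · apply QG.ext' <;> simp [tau0]
    · intro c
      simp only [tau0, MonoidHom.comp_apply, MonoidHom.mk'_apply, QG.del_X, Finset.mem_filter,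
        Finset.mem_univ, true_and]
      split_ifs <;> rfl
    · intro c; simp [tau0]
  let η : QG F (GLV F V) V κ τ b →* ZG F V b ∅ := MonoidHom.mk' (fun g => ⟨g.A, fun c => g.X c.1,
      fun β => match β with
        | none => g.t β0
        | some β => g.t β⟩) (by
    intro g h
    apply QG.ext'
    · simp
    · intro c; simp
    · rintro (_ | c) <;> simp)
  let χ : ZG F V b ∅ →* Fˣ := MonoidHom.mk' (fun g => g.t none * (g.t (some β0))⁻¹) (by
    intro g h
    simp only [QG.mul_t, Pi.mul_apply]
    rw [mul_inv, mul_mul_mul_comm])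
  refine transfer_ker η ?_ χ (card_units_ne hk) ?_ _ ?_
  · intro g h e
    apply QG.ext'
    · exact congrArg (fun y : ZG F V b ∅ => y.A) e
    · intro c
      exact congrFun (congrArg QG.X e) ⟨c, by simp⟩
    · intro c
      exact congrFun (congrArg QG.t e) (some c)
  · intro g hg
    refine ⟨⟨g.A, fun c => g.X ⟨c, by simp⟩, fun β => g.t (some β)⟩, ?_⟩
    apply QG.ext'
    · rfl
    · intro c; rfl
    · rintro (_ | c)
      · exact (mul_inv_eq_one.1 hg).symm
      · rfl
  · rw [← hY]
    simp only [res_res]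
    apply res_eq_of_comp
    intro g
    simp only [MonoidHom.comp_apply, Subgroup.subtype_apply, zeta_val]
    apply QG.ext'
    · apply QG.ext' <;> simp [η, tau0]
    · intro c; simp [η, tau0]
    · intro c; simp [η, tau0]

end step

section step2
variable {k F U κ τ : Type} [Field k] [Field F] [Finite F] [AddCommGroup U] [Module F U] [Finite U]
  [Finite κ] [Finite τ] (b : κ → τ)

lemma stepiii {D : ℕ} (x : H k (QG F (GLV F ((U × F) × F)) ((U × F) × F) κ τ b) D)
    (h : res (zeta b ∅ ∅) (res (KS F (U × F) b ∅ ∅).subtype (res (nuK F (U × F) b) x)) = 0) :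
    res (dV b ∅ ∅) (res (KS F (U × F) b ∅ ∅).subtype (res (nuK F (U × F) b) x)) = 0 := by
  let sw : GLV F ((U × F) × F) :=
      { toFun := fun w => ((w.1.1, w.2), w.1.2)
        invFun := fun w => ((w.1.1, w.2), w.1.2)
        map_add' := fun _ _ => rfl
        map_smul' := fun _ _ => rfl
        left_inv := fun _ => rfl
        right_inv := fun _ => rfl }
  let κ' : KS F (U × F) b ∅ ∅ →* ZG F (U × F) b ∅ := MonoidHom.mk' (fun g =>
      ⟨(LinearEquiv.refl F U).prodCongr (DistribMulAction.toLinearEquiv F F (g.1.A.t ())),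
       fun c => (0, (g.1.X c).2),
       fun β => match β with
        | none => 1
        | some β => g.1.t β⟩) (by
    intro g h
    apply QG.ext'
    · apply LinearEquiv.ext
      intro w
      ext <;> simp [mul_smul]
    · intro c; ext <;> simp
    · rintro (_ | c) <;> simp)
  have h1 := congrArg (res κ') h
  rw [map_zero] at h1
  rw [← h1]
  simp only [res_res]
  apply res_conj _ _ (⟨sw, 0, 1⟩ : QG F (GLV F ((U × F) × F)) ((U × F) × F) κ τ b)
  intro g
  simp only [MonoidHom.comp_apply, Subgroup.subtype_apply, zeta_val, dV_val]
  apply QG.ext'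
  · simp only [QG.mul_A, nuK_A]
    apply LinearEquiv.ext
    intro w
    simp only [LinearEquiv.mul_apply, pToGL_apply]
    ext <;> simp [sw, κ']
  · intro c
    simp only [QG.mul_X, nuK_A, nuK_X]
    ext <;> simp [sw, κ']
  · intro c
    simp [nuK_t, κ']

theorem main_step {M j : ℕ} (hk : (Nat.card F : k) = 0) (lam : Fˣ) (hlam : lam ≠ 1)
    (hM : Main k F M j) (hV : Module.finrank F (U × F) = j) (T : Finset τ)
    (hT : ∀ c, b c ∈ T) (hne : T.Nonempty) {D : ℕ} (hD : D + 2 < j + 1 + T.card + M)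
    (x : H k (QG F (GLV F ((U × F) × F)) ((U × F) × F) κ τ b) D)
    (hx : ∀ β ∈ T, res (QG.del (fun c => b c = β)) x = 0) : x = 0 := by
  classical
  apply nuK_transfer b hk
  have hx' : ∀ β ∈ T, res (QG.del (fun c => b c = β)) (res (nuK F (U × F) b) x) = 0 := by
    intro β hβ
    have := congrArg (res (nuK F (U × F) b)) (hx β hβ)
    rw [map_zero] at this
    rw [← this, res_res, res_res]
    apply res_eq_of_comp
    intro g
    apply QG.ext'
    · rfl
    · intro c; rfl
    · intro c; rfl
  obtain ⟨β0, hβ0⟩ := hne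
  have hz := stepii2 b hk hM hV T hT hD _ hx' β0 hβ0
  have hd := stepiii b x hz
  have h0 := PS_all b hk lam hlam hM hV T hT _ ∅ ∅ rfl D (by simpa using hD)
    (res (KS F (U × F) b ∅ ∅).subtype (res (nuK F (U × F) b) x)) (by
      intro β hβ
      have := congrArg (res (KS F (U × F) b ∅ ∅).subtype) (hx' β (by simpa using hβ))
      rw [map_zero] at this
      rw [← this, res_res, res_res _ (KS F (U × F) b ∅ ∅).subtype]
      apply res_eq_of_comp
      intro g
      rfl) hd hz
  let s : KG F (U × F) b →* KS F (U × F) b ∅ ∅ := MonoidHom.mk' (fun g => ⟨g, by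
    simp [mem_KS]⟩) (fun _ _ => rfl)
  have h1 := congrArg (res s) h0
  rw [map_zero, res_res] at h1
  rw [← h1]
  conv_lhs => rw [← res_id (res (nuK F (U × F) b) x)]
  apply res_eq_of_comp
  intro g
  rfl

end step2
end Coh

namespace Coh

section fin
variable {k F : Type} [Field k] [Field F] [Finite F]

lemma GL_transport {V V₁ : Type} [AddCommGroup V] [Module F V] [AddCommGroup V₁] [Module F V₁]
    (e : V₁ ≃ₗ[F] V) {D : ℕ} (x : H k (GLV F V) D) (h : res (conjE e) x = 0) : x = 0 := by
  have h2 := congrArg (res (conjE e.symm)) h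
  rw [map_zero, res_res] at h2
  rw [← h2]
  conv_lhs => rw [← res_id x]
  apply res_eq_of_comp
  intro g
  ext w <;> simp [conjE_apply]

/-- transport -/
noncomputable def mapE {V V₁ κ τ : Type} [AddCommGroup V] [Module F V] [AddCommGroup V₁] [Module F V₁]
    (e : V₁ ≃ₗ[F] V) (b : κ → τ) : QG F (GLV F V₁) V₁ κ τ b →* QG F (GLV F V) V κ τ b :=
  QG.mapG (conjE e) e.toLinearMap (by
      intro g v
      simp [conjE_apply])

lemma QG_transport {V V₁ κ τ : Type} [AddCommGroup V] [Module F V] [AddCommGroup V₁] [Module F V₁]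
    (e : V₁ ≃ₗ[F] V) (b : κ → τ) {D : ℕ} (x : H k (QG F (GLV F V) V κ τ b) D)
    (h : res (mapE e b) x = 0) : x = 0 := by
  have h2 := congrArg (res (mapE e.symm b)) h
  rw [map_zero, res_res] at h2
  rw [← h2]
  conv_lhs => rw [← res_id x]
  apply res_eq_of_comp
  intro g
  apply QG.ext'
  · ext w; simp [mapE, QG.mapG, conjE_apply]
  · intro c; simp [mapE, QG.mapG]
  · intro c; simp [mapE, QG.mapG]

lemma QG_transport_del {V V₁ κ τ : Type} [AddCommGroup V] [Module F V] [AddCommGroup V₁] [Module F V₁]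
    (e : V₁ ≃ₗ[F] V) (b : κ → τ) {D : ℕ} (x : H k (QG F (GLV F V) V κ τ b) D) (U : κ → Prop)
    (h : res (QG.del U) x = 0) : res (QG.del U) (res (mapE e b) x) = 0 := by
  have h2 := congrArg (res (mapE e b)) h
  rw [map_zero] at h2
  rw [← h2, res_res, res_res]
  apply res_eq_of_comp
  intro g
  apply QG.ext'
  · simp [mapE, QG.mapG]
  · intro c
    simp only [mapE, QG.mapG, MonoidHom.comp_apply, MonoidHom.mk'_apply, QG.del_X]
    split_ifs <;> simp
  · intro c; simp [mapE, QG.mapG]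

lemma GL_vanish {M j : ℕ} (hk : (Nat.card F : k) = 0) (hM : Main k F M j) (V : Type) [AddCommGroup V]
    [Module F V] [Finite V] (hV : Module.finrank F V = j + 1) {D : ℕ} (hD : D + 2 < j + 1 + M)
    (x : H k (GLV F V) D) : x = 0 := by
  haveI : Module.Finite F V := Module.Finite.of_finite
  let V2 := Fin j → F
  have hV2 : Module.finrank F V2 = j := by simp [V2]
  have e : (V2 × F) ≃ₗ[F] V := LinearEquiv.ofFinrankEq _ _ (by
    rw [Module.finrank_prod, hV, hV2]; simp)
  apply GL_transport e
  apply Cprop_main hk j V2 hV2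
  generalize res (pToGL F V2) (res (conjE e) x) = z
  rw [← sub_eq_zero]
  refine hM V2 hV2 Unit Unit id {()} (by simp) D (by simpa using hD) _ ?_
  intro β _
  rw [map_sub, sub_eq_zero, res_res]
  apply res_eq_of_comp
  intro g
  apply QG.ext' <;> simp

lemma QG_empty (hk : (Nat.card F : k) = 0) {V κ τ : Type} [AddCommGroup V] [Module F V] [Finite V]
    [Finite κ] [Finite τ] [IsEmpty κ] (b : κ → τ) {D : ℕ} (hGL : ∀ y : H k (GLV F V) D, y = 0)
    (x : H k (QG F (GLV F V) V κ τ b) D) : x = 0 := by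
  haveI := Fintype.ofFinite τ
  let ι : GLV F V →* QG F (GLV F V) V κ τ b := MonoidHom.mk' (fun A => ⟨A, 0, 1⟩) (by
    intro g h
    apply QG.ext' <;> simp)
  let χ : QG F (GLV F V) V κ τ b →* (τ → Fˣ) := MonoidHom.mk' (fun g => g.t) (by
    intro g h; rfl)
  refine transfer_ker ι ?_ χ ?_ ?_ x (hGL _)
  · intro g h e
    exact congrArg (fun y : QG F (GLV F V) V κ τ b => y.A) e
  · rw [Nat.card_fun, Nat.cast_pow]
    exact pow_ne_zero _ (card_units_ne hk)
  · intro g hg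
    refine ⟨g.A, ?_⟩
    apply QG.ext'
    · rfl
    · intro c; exact isEmptyElim c
    · intro β; exact (congrFun hg β).symm

theorem Main_all {ι : Type} [Fintype ι] (i0 : ι) (v : ι → F)
    (hv : ∀ S : Finset ι, S.Nonempty → ∑ i ∈ S, v i ≠ 0)
    (hk : (Nat.card F : k) = 0) (lam : Fˣ) (hlam : lam ≠ 1) (j : ℕ) :
    Main k F (Fintype.card ι) j := by
  induction j with
  | zero =>
    intro V _ _ _ hV κ τ _ _ b T hT D hD x hx
    haveI : Module.Finite F V := Module.Finite.of_finite
    haveI : Subsingleton V := Module.finrank_zero_iff.1 hV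
    rcases T.eq_empty_or_nonempty with rfl | ⟨β0, hβ0⟩
    · haveI : IsEmpty κ := ⟨fun c => by simpa using hT c⟩
      apply QG_empty hk b ?_ x
      intro y
      apply H_coprime
      haveI : Subsingleton (GLV F V) := ⟨fun a b => LinearEquiv.ext fun v => Subsingleton.elim _ _⟩
      rw [Nat.card_of_subsingleton 1]; simp
    · rw [← hx β0 hβ0]
      conv_lhs => rw [← res_id x]
      apply res_eq_of_comp
      intro g
      apply QG.ext'
      · rfl
      · intro c; exact Subsingleton.elim _ _
      · intro c; rfl
  | succ j ih =>
    intro V _ _ _ hV κ τ _ _ b T hT D hD x hx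
    rcases T.eq_empty_or_nonempty with rfl | hne
    · haveI : IsEmpty κ := ⟨fun c => by simpa using hT c⟩
      apply QG_empty hk b ?_ x
      intro y
      exact GL_vanish hk ih V hV (by simpa using hD) y
    · rcases j with _ | j
      · obtain ⟨β0, hβ0⟩ := hne
        exact lemmaP i0 v hv T hT β0 hβ0 D (by omega) x hx
      · haveI : Module.Finite F V := Module.Finite.of_finite
        let U := Fin j → F
        have e : ((U × F) × F) ≃ₗ[F] V := LinearEquiv.ofFinrankEq _ _ (by
          rw [Module.finrank_prod, Module.finrank_prod, hV]; simp [U])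
        apply QG_transport e
        refine main_step b hk lam hlam ih (by rw [Module.finrank_prod]; simp [U]) T hT hne (by omega) _ ?_
        intro β hβ
        exact QG_transport_del e b x _ (hx β hβ)

end fin
end Coh

namespace Coh
open GroupHomologyBar

section bridge

lemma dd_sum {E A : Type} [AddCommGroup A] : ∀ (n : ℕ) (f : (Fin n → E) → A) (x : Fin (n+1) → E),
    dd n f x = ∑ i : Fin (n+1), ((-1 : ℤ) ^ (i : ℕ)) • f (fun a => x (i.succAbove a))
  | 0, f, x => by simp [dd]; rfl
  | n+1, f, x => by
    rw [Fin.sum_univ_succ]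
    simp only [dd, dd_sum n]
    rw [sub_eq_add_neg, ← Finset.sum_neg_distrib]
    congr 1
    · simp; rfl
    · apply Finset.sum_congr rfl
      intro i _
      have : (Fin.cons (x 0) (fun a => Fin.tail x (i.succAbove a)) : Fin (n+1) → E) =
          fun a => x (i.succ.succAbove a) := by
        funext a
        refine Fin.cases ?_ (fun j => ?_) a
        · simp
        · simp [Fin.tail]
      rw [this]
      simp [pow_succ]

variable {k G : Type} [Field k] [Group G]

lemma dd_partialProd {n : ℕ} (u : (Fin (n+1) → G) → k) (hu : u ∈ Cc k G (n+1)) (g : Fin (n+1) → G) :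
    dd (n+1) u (Fin.partialProd g) = u (Fin.partialProd (Fin.tail g)) +
      ∑ j : Fin (n+1), ((-1 : ℤ) ^ ((j : ℕ) + 1)) • u (Fin.partialProd (Fin.contractNth j (· * ·) g)) := by
  rw [dd_sum, Fin.sum_univ_succ]
  congr 1
  · rw [← hu (g 0) (Fin.partialProd (Fin.tail g))]
    simp only [Fin.val_zero, pow_zero, one_smul, Fin.succAbove_zero]
    congr 1
    funext a
    rw [Fin.partialProd_succ']
  · apply Finset.sum_congr rfl
    intro j _
    rw [Fin.partialProd_contractNth]
    rfl

lemma ev_d {n : ℕ} (u : (Fin (n+1) → G) → k) (hu : u ∈ Cc k G (n+1)) (y : chains G k (n+1)) :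
    Finsupp.linearCombination k (fun g => u (Fin.partialProd g)) (d G k n y) =
    Finsupp.linearCombination k (fun g => dd (n+1) u (Fin.partialProd g)) y := by
  induction y using Finsupp.induction_linear with
  | zero => simp
  | add f g hf hg => rw [map_add, map_add, map_add, hf, hg]
  | single g a =>
    rw [d_single, map_add, map_sum, Finsupp.linearCombination_single, Finsupp.linearCombination_single,
      dd_partialProd u hu, smul_add, Finset.smul_sum]
    congr 1
    apply Finset.sum_congr rfl
    intro j _
    rw [map_zsmul, Finsupp.linearCombination_single, smul_comm]

lemma dd_inv {n : ℕ} (u : (Fin n → G) → k) (hu : u ∈ Cc k G n) (g : G) (x : Fin (n+1) → G) :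
    dd n u (fun i => g * x i) = dd n u x := by
  rw [dd_sum, dd_sum]
  apply Finset.sum_congr rfl
  intro i _
  rw [← hu g (fun a => x (i.succAbove a))]

lemma d_smul {n : ℕ} (c : k) (y : chains G k (n+1)) : d G k n (c • y) = c • d G k n y := by
  induction y using Finsupp.induction_linear with
  | zero => simp
  | add f g hf hg => rw [smul_add, map_add, map_add, smul_add, hf, hg]
  | single g a =>
    rw [Finsupp.smul_single, d_single, d_single, smul_add, Finset.smul_sum, Finsupp.smul_single]
    congr 1
    apply Finset.sum_congr rfl
    intro j _
    rw [smul_comm c, Finsupp.smul_single c]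

lemma exact_of_van {m : ℕ} (hvan : ∀ x : H k G (m+1), x = 0) (z : chains G k (m+1))
    (hz : d G k m z = 0) : ∃ y, d G k (m+1) y = z := by
  by_contra hne
  let dk : chains G k (m+2) →ₗ[k] chains G k (m+1) :=
    { toFun := fun y => d G k (m+1) y
      map_add' := fun _ _ => map_add _ _ _
      map_smul' := fun c y => d_smul c y }
  obtain ⟨φ, hφ1, hφ2⟩ := Submodule.exists_le_ker_of_notMem (p := LinearMap.range dk) (v := z) (by
    rintro ⟨y, hy⟩; exact hne ⟨y, hy⟩)
  let f : (Fin (m+2) → G) → k := fun x =>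
    φ (Finsupp.single (fun i : Fin (m+1) => (x i.castSucc)⁻¹ * x i.succ) 1)
  have hf : f ∈ Cc k G (m+2) := by
    intro g x
    simp only [f]
    congr 3
    funext i
    group
  have hfp : ∀ g, f (Fin.partialProd g) = φ (Finsupp.single g 1) := by
    intro g
    simp only [f]
    congr 2
    funext i
    exact Fin.partialProd_right_inv g i
  have hφ : ∀ y, φ y = Finsupp.linearCombination k (fun g => f (Fin.partialProd g)) y := by
    intro y
    induction y using Finsupp.induction_linear with
    | zero => simp
    | add a b ha hb => rw [map_add, map_add, ha, hb]
    | single g a =>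
      rw [Finsupp.linearCombination_single, hfp, ← map_smul, Finsupp.smul_single, smul_eq_mul, mul_one]
  have hdf : dd (m+2) f = 0 := by
    funext x
    have e := Fin.partialProd_left_inv x
    rw [← e]
    have e2 := dd_inv f hf (x 0) (Fin.partialProd fun i : Fin (m+2) => (x i.castSucc)⁻¹ * x i.succ)
    refine e2.trans ?_
    have e3 := ev_d f hf (Finsupp.single (fun i : Fin (m+2) => (x i.castSucc)⁻¹ * x i.succ) 1)
    rw [Finsupp.linearCombination_single, one_smul, ← hφ] at e3
    rw [← e3]
    exact hφ2 ⟨_, rfl⟩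
  obtain ⟨u, hu, hdu⟩ := (cls_eq_zero f ⟨hf, hdf⟩).1 (hvan _)
  apply hφ1
  rw [hφ, ← hdu, ← ev_d u hu, hz, map_zero]

lemma subsingleton_of_van {m : ℕ} (hvan : ∀ x : H k G (m+1), x = 0) :
    Subsingleton (Homology G k (m+1)) := by
  apply Submodule.Quotient.subsingleton_iff.2
  rw [eq_top_iff]
  rintro ⟨z, hz⟩ _
  exact exact_of_van hvan z hz

lemma d_zero (A : Type) [AddCommGroup A] (y : chains G A 1) : d G A 0 y = 0 := by
  induction y using Finsupp.induction_linear with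
  | zero => simp
  | add a b ha hb => rw [map_add, ha, hb, add_zero]
  | single g a =>
    rw [d_single]
    rw [Fin.sum_univ_one]
    simp only [Fin.val_zero, zero_add, pow_one, neg_smul, one_smul]
    rw [Subsingleton.elim (Fin.contractNth 0 (· * ·) g) (Fin.tail g), add_neg_cancel]

lemma bij_zero {G' : Type} [Group G'] (A : Type) [AddCommGroup A] (φ : G →* G') :
    Function.Bijective (inducedMap A φ 0) := by
  constructor
  · rw [← LinearMap.ker_eq_bot, LinearMap.ker_eq_bot']
    intro x hx
    obtain ⟨⟨a, ha⟩, rfl⟩ := Submodule.mkQ_surjective _ x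
    have h1 : cyclesMap A φ 0 ⟨a, ha⟩ ∈ boundaries G' A 0 := by
      rw [← Submodule.Quotient.mk_eq_zero]
      exact hx
    obtain ⟨y, hy⟩ := h1
    rw [d_zero] at hy
    have h2 : Finsupp.mapDomain (fun v : Fin 0 → G => φ ∘ v) a = 0 := hy.symm
    have h3 : a = 0 := by
      apply Finsupp.mapDomain_injective (f := fun v : Fin 0 → G => (φ ∘ v : Fin 0 → G'))
        (fun _ _ _ => Subsingleton.elim _ _)
      rw [h2, Finsupp.mapDomain_zero]
    subst h3
    exact map_zero _
  · intro x
    obtain ⟨⟨a, ha⟩, rfl⟩ := Submodule.mkQ_surjective _ x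
    refine ⟨Submodule.Quotient.mk ⟨Finsupp.single (fun i => i.elim0) (a (fun i => i.elim0)), trivial⟩, ?_⟩
    refine congrArg Submodule.Quotient.mk (Subtype.ext ?_)
    refine (chainsMap_single A φ _ _).trans ?_
    refine Finsupp.ext fun v => ?_
    have e1 : v = (fun i : Fin 0 => i.elim0) := Subsingleton.elim _ _
    have e2 : (φ ∘ (fun i : Fin 0 => (i.elim0 : G))) = (fun i : Fin 0 => i.elim0) := Subsingleton.elim _ _
    rw [e1, e2]
    simp

end bridge

lemma GL_final (ℓ r : ℕ) (hℓ : ℓ.Prime) [Fact ℓ.Prime] (hr : 1 ≤ r)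
    (F : Type) [Field F] [Fintype F] (hcard : Fintype.card F = ℓ ^ r)
    (hne : ℓ ^ r ≠ 2) (n : ℕ) (hn : 1 ≤ n) (D : ℕ) (hD1 : 1 ≤ D) (hD : D + 2 < n + r * (ℓ - 1)) :
    Subsingleton (Homology (GL (Fin n) F) (ZMod ℓ) D) := by
  obtain ⟨v, hv⟩ := exists_v ℓ r hℓ F hcard hr
  have hl2 := hℓ.two_le
  have hk : (Nat.card F : ZMod ℓ) = 0 := by
    rw [Nat.card_eq_fintype_card, hcard, Nat.cast_pow, ZMod.natCast_self, zero_pow (by omega)]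
  have h2 : 2 < Fintype.card F := by
    rw [hcard]
    have : ℓ ^ 1 ≤ ℓ ^ r := Nat.pow_le_pow_right (by omega) hr
    rw [pow_one] at this
    omega
  obtain ⟨lam, hlam⟩ : ∃ lam : Fˣ, lam ≠ 1 := by
    classical
    have : 1 < Fintype.card Fˣ := by rw [Fintype.card_units]; omega
    haveI := Fintype.one_lt_card_iff_nontrivial.1 this
    exact exists_ne 1
  have hM := Main_all (k := ZMod ℓ) (F := F) (⟨0, by omega⟩, ⟨0, by omega⟩) v hv hk lam hlam (n-1)
  obtain ⟨m, rfl⟩ : ∃ m, D = m + 1 := ⟨D - 1, by omega⟩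
  apply subsingleton_of_van
  intro x
  let B := Pi.basisFun F (Fin n)
  let e : GL (Fin n) F ≃* GLV F (Fin n → F) := (Matrix.GeneralLinearGroup.toLin' B).trans
    (LinearMap.GeneralLinearGroup.generalLinearEquiv F (Fin n → F))
  have h0 : res e.symm.toMonoidHom x = 0 := by
    refine GL_vanish hk hM (Fin n → F) (by simp; omega) ?_ _
    simp only [Fintype.card_prod, Fintype.card_fin]
    omega
  have h1 := congrArg (res e.toMonoidHom) h0
  rw [map_zero, res_res] at h1
  rw [← h1]
  conv_lhs => rw [← res_id x]
  apply res_eq_of_comp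
  intro g
  exact (e.symm_apply_apply g).symm

end Coh

open GroupHomologyBar in
/-- Homological stability for general linear groups over the finite field `𝔽_{ℓ^r} ≠ 𝔽₂`,
with coefficients in `𝔽_ℓ = ZMod ℓ` (trivial action): the stabilization map
`GL_n(F) → GL_{n+1}(F)` induces an isomorphism on `H_d(-; 𝔽_ℓ)` for
`d ≤ n + r(ℓ-1) - 3` and a surjection for `d = n + r(ℓ-1) - 2`. -/
theorem GL_homology_stability_char (ℓ r : ℕ) (hℓ : ℓ.Prime) (hr : 1 ≤ r)
    (F : Type) [Field F] [Fintype F] (hcard : Fintype.card F = ℓ ^ r)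
    (hne : ℓ ^ r ≠ 2) (n : ℕ) (hn : 1 ≤ n) :
    (∀ d : ℕ, d ≤ n + r * (ℓ - 1) - 3 →
      Function.Bijective (inducedMap (ZMod ℓ) (glStab F n) d)) ∧
    Function.Surjective (inducedMap (ZMod ℓ) (glStab F n) (n + r * (ℓ - 1) - 2)) := by
  haveI := Fact.mk hℓ
  have hl2 := hℓ.two_le
  have hM : 2 ≤ r * (ℓ - 1) := by
    rcases Nat.lt_or_ge ℓ 3 with h | h
    · have : ℓ = 2 := by omega
      subst this
      have : r ≠ 1 := by rintro rfl; simp at hne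
      omega
    · calc 2 = 1 * 2 := rfl
        _ ≤ r * (ℓ - 1) := Nat.mul_le_mul hr (by omega)
  constructor
  · intro d hd
    rcases Nat.eq_zero_or_pos d with rfl | h0
    · exact Coh.bij_zero _ _
    · haveI := Coh.GL_final ℓ r hℓ hr F hcard hne n hn d h0 (by omega)
      haveI := Coh.GL_final ℓ r hℓ hr F hcard hne (n+1) (by omega) d h0 (by omega)
      exact ⟨fun _ _ _ => Subsingleton.elim _ _, fun y => ⟨0, Subsingleton.elim _ _⟩⟩
  · haveI := Coh.GL_final ℓ r hℓ hr F hcard hne (n+1) (by omega) (n + r * (ℓ - 1) - 2) (by omega) (by omega)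
    exact fun y => ⟨0, Subsingleton.elim _ _⟩
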